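/- arXiv:0909.4915 — 2 statements merged into one kernel-verified Lean document; each statement's English description precedes it below -/
import Mathlib

section
/- (Central transversal theorem) Let 0 ≤ m ≤ d and let μ_0, …, μ_m be probability measures on ℝ^d, each absolutely continuous with respect to Lebesgue measure. Then there exists an affine subspace L of ℝ^d of dimension m such that every closed halfspace H containing L satisfies μ_i(H) ≥ 1/(d−m+1) for all i = 0, …, m. -/
open scoped InnerProductSpace ENNReal
open MeasureTheory

/-!
Put `k = d - m`. It suffices to find orthonormal vectors `W₁, …, W_k` and a point `p` of `ℝ^k` such
that `p` is a centerpoint, that is, a point of depth at least `1 / (k + 1)`, of the image of each of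
the measures under `y ↦ (⟪y, Wᵢ⟫)ᵢ`: the flat `{y | ∀ i, ⟪y, Wᵢ⟫ = pᵢ}` is then as required.
Centerpoints exist by Helly's theorem. Points of depth greater than some `α < 1 / (k + 1)`, with a
small slack, form a convex set that locally contains constant selections, so a partition of unity
and an average over sign changes give, for each of the `m + 1` measures, a selection `c_j(W)` that
is continuous in `W` and changes the sign of its `i`-th coordinate along with that of `Wᵢ`.

The frames `W` with `Wᵢ` in the span of the first `m + i` basis vectors are parametrized by a
product of hemispheres, that is, by the product of the cubes `[-1, 1]^(m + i - 1)`. The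
inner products `⟪Wᵢ, Wⱼ⟫` for `j < i` and the coordinates of the differences `c_j(W) - c_0(W)` are
as many functions as there are dimensions, and changing the sign of `W_b` changes those of block `b`
and, in a triangular fashion, some of the later ones. A Borsuk–Ulam theorem for products of cubes
yields a common zero, hence an orthonormal frame for which all selections agree. In its discrete
form, the number of fully labelled simplices modulo 2 is a cup product of coboundaries and depends
only on the boundary behaviour of the labels. A compactness argument lets `α` tend to
`1 / (k + 1)` and the slack to `0`.
-/

namespace CentralTransversal

open Filter Topology

section Blocks

variable {ι κ R : Type*} [DecidableEq κ]

/-- The point `x` with the sign of its coordinates in block `b` changed, where `blk` assigns to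
every coordinate its block. -/
def flipBlock [Neg R] (blk : ι → κ) (b : κ) (x : ι → R) : ι → R :=
  fun a => if blk a = b then -x a else x a

/-- The point `x` lies in the part of the boundary of the cube `[-n, n]^ι` on which block `b`
attains the radius `n`; as a product of cubes, one for each block, the cube has these parts as the
faces coming from the factors. -/
def OnBlockBoundary [AddCommGroup R] [LinearOrder R] (n : R) (blk : ι → κ) (b : κ) (x : ι → R) :
    Prop :=
  (∀ a, |x a| ≤ n) ∧ ∃ a, blk a = b ∧ |x a| = n

/-- The labelling `l` of the points of the cube, with labels in `ZMod 2`, changes by `τ b` when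
block `b` is flipped on the boundary part belonging to `b`. -/
def IsTwisted [AddCommGroup R] [LinearOrder R] (n : R) (blk : ι → κ) (τ : κ → ZMod 2)
    (l : (ι → R) → ZMod 2) : Prop :=
  ∀ ⦃b x⦄, OnBlockBoundary n blk b x → l (flipBlock blk b x) = l x + τ b

lemma flipBlock_apply_of_eq [Neg R] {blk : ι → κ} {b : κ} {a : ι} (h : blk a = b) (x : ι → R) :
    flipBlock blk b x a = -x a :=
  if_pos h

lemma flipBlock_apply_of_ne [Neg R] {blk : ι → κ} {b : κ} {a : ι} (h : blk a ≠ b) (x : ι → R) :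
    flipBlock blk b x a = x a :=
  if_neg h

@[simp]
lemma flipBlock_flipBlock [InvolutiveNeg R] (blk : ι → κ) (b : κ) (x : ι → R) :
    flipBlock blk b (flipBlock blk b x) = x := by
  ext a
  by_cases h : blk a = b <;> simp [flipBlock, h]

@[simp]
lemma abs_flipBlock_apply [AddCommGroup R] [LinearOrder R] (blk : ι → κ) (b : κ) (x : ι → R)
    (a : ι) : |flipBlock blk b x a| = |x a| := by
  by_cases h : blk a = b <;> simp [flipBlock, h]

end Blocks

section Grid

variable {N : ℕ} {n : ℤ}

/-- The edges of the subdivision of `[-n, n]` into unit intervals, as pairs of an even and an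
adjacent odd endpoint. -/
noncomputable def gridEdges (n : ℤ) : Finset (ℤ × ℤ) :=
  {q ∈ Finset.Icc (-n) n ×ˢ Finset.Icc (-n) n | Even q.1 ∧ (q.2 = q.1 + 1 ∨ q.2 = q.1 - 1)}

lemma mem_gridEdges {q : ℤ × ℤ} :
    q ∈ gridEdges n ↔ (-n ≤ q.1 ∧ q.1 ≤ n) ∧ (-n ≤ q.2 ∧ q.2 ≤ n) ∧ Even q.1 ∧
      (q.2 = q.1 + 1 ∨ q.2 = q.1 - 1) := by
  simp [gridEdges, and_assoc]

lemma neg_mem_gridEdges {q : ℤ × ℤ} (hq : q ∈ gridEdges n) : -q ∈ gridEdges n := by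
  obtain ⟨h₁, h₂, h₃, h₄⟩ := mem_gridEdges.1 hq
  exact mem_gridEdges.2 ⟨by simp; omega, by simp; omega, by simpa using h₃, by simp; omega⟩

lemma reflect_even_mem_gridEdges (hn : Even n) {q : ℤ × ℤ} (hq : q ∈ gridEdges n) :
    (2 * q.2 - q.1, q.2) ∈ gridEdges n := by
  obtain ⟨h₁, h₂, ⟨r, hr⟩, h₄⟩ := mem_gridEdges.1 hq
  obtain ⟨m, rfl⟩ := hn
  exact mem_gridEdges.2 ⟨by omega, by omega, ⟨q.2 - r, by omega⟩, by omega⟩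

lemma reflect_odd_mem_gridEdges {q : ℤ × ℤ} (hq : q ∈ gridEdges n) (hqn : |q.1| ≠ n) :
    (q.1, 2 * q.1 - q.2) ∈ gridEdges n := by
  obtain ⟨h₁, h₂, h₃, h₄⟩ := mem_gridEdges.1 hq
  have hlt : |q.1| < n := lt_of_le_of_ne (abs_le.2 h₁) hqn
  rw [abs_lt] at hlt
  exact mem_gridEdges.2 ⟨by omega, by omega, h₃, by omega⟩

/-- The simplices of the triangulation of the cube `[-n, n]^N`: a product of edges is divided into
simplices by the orders of the coordinates, each being encoded by the position `s.2 a` of the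
coordinate `a`. -/
abbrev GridSimplex (N : ℕ) : Type := (Fin N → ℤ × ℤ) × Equiv.Perm (Fin N)

/-- The simplices of the triangulation inside the cube `[-n, n]^N`. -/
noncomputable def gridSimplices (N : ℕ) (n : ℤ) : Finset (GridSimplex N) :=
  (Fintype.piFinset fun _ => gridEdges n) ×ˢ Finset.univ

lemma mem_gridSimplices {s : GridSimplex N} :
    s ∈ gridSimplices N n ↔ ∀ a, s.1 a ∈ gridEdges n := by
  simp [gridSimplices]

/-- The `j`-th vertex of a simplex, for `0 ≤ j ≤ N`: the path of vertices starts at the even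
corner and passes to the odd endpoint of one coordinate at a time. -/
def vertex (s : GridSimplex N) (j : ℕ) : Fin N → ℤ :=
  fun a => if (s.2 a : ℕ) < j then (s.1 a).2 else (s.1 a).1

lemma abs_vertex_le {s : GridSimplex N} (hs : s ∈ gridSimplices N n) (j : ℕ) (a : Fin N) :
    |vertex s j a| ≤ n := by
  obtain ⟨h₁, h₂, -⟩ := mem_gridEdges.1 (mem_gridSimplices.1 hs a)
  unfold vertex
  split_ifs
  exacts [abs_le.2 h₂, abs_le.2 h₁]

lemma abs_vertex_sub_vertex_le {s : GridSimplex N} (hs : s ∈ gridSimplices N n) (i j : ℕ)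
    (a : Fin N) : |vertex s i a - vertex s j a| ≤ 1 := by
  obtain ⟨-, -, -, h⟩ := mem_gridEdges.1 (mem_gridSimplices.1 hs a)
  unfold vertex
  split_ifs <;> rw [abs_le] <;> omega

lemma vertex_flipBlock {κ : Type*} [DecidableEq κ] (blk : Fin N → κ) (b : κ) (s : GridSimplex N)
    (j : ℕ) : vertex (flipBlock blk b s.1, s.2) j = flipBlock blk b (vertex s j) := by
  ext a
  by_cases h : blk a = b <;> by_cases h' : (s.2 a : ℕ) < j <;> simp [vertex, flipBlock, h, h']

lemma vertex_update {s : GridSimplex N} {c : Fin N} {q : ℤ × ℤ} {j : ℕ}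
    (h : if (s.2 c : ℕ) < j then q.2 = (s.1 c).2 else q.1 = (s.1 c).1) :
    vertex (Function.update s.1 c q, s.2) j = vertex s j := by
  ext a
  obtain rfl | ha := eq_or_ne a c
  · unfold vertex
    split_ifs at h ⊢ <;> simpa using h
  · simp [vertex, ha]

lemma sum_eq_zero_of_involution {α : Type*} {S : Finset α} {f : α → ZMod 2} (g : α → α)
    (g_mem : ∀ s ∈ S, g s ∈ S) (g_ne : ∀ s ∈ S, g s ≠ s) (g_g : ∀ s ∈ S, g (g s) = s)
    (f_g : ∀ s ∈ S, f s = f (g s)) : ∑ s ∈ S, f s = 0 :=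
  Finset.sum_involution (fun s _ => g s) (fun s hs => by rw [← f_g s hs, CharTwo.add_self_eq_zero])
    (fun s hs _ => g_ne s hs) g_mem g_g

section Facets

variable {F : (ℕ → Fin N → ℤ) → ZMod 2}

/-- Interchanging the `(j - 1)`-st and `j`-th steps of the path changes the vertex `j` only. -/
lemma sum_vertex_eq_zero_of_dependsOn_compl {j : ℕ} (hj : 0 < j) (hjN : j < N)
    (hF : DependsOn F {j}ᶜ) : ∑ s ∈ gridSimplices N n, F (vertex s) = 0 := by
  set τ : Equiv.Perm (Fin N) := Equiv.swap ⟨j - 1, by omega⟩ ⟨j, hjN⟩ with hτ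
  refine sum_eq_zero_of_involution (fun s => (s.1, s.2.trans τ))
    (fun s hs => mem_gridSimplices.2 fun a => mem_gridSimplices.1 hs a) (fun s _ h => ?_)
    (fun s _ => Prod.ext rfl (by ext a; simp [hτ])) (fun s _ => hF fun i hi => ?_)
  · have hfix := Equiv.congr_fun (congrArg Prod.snd h) (s.2.symm ⟨j, hjN⟩)
    simp only [Equiv.trans_apply, Equiv.apply_symm_apply, hτ, Equiv.swap_apply_right,
      Fin.mk.injEq] at hfix
    omega
  · have hlt (c : Fin N) : (τ c : ℕ) < i ↔ (c : ℕ) < i := by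
      simp only [Set.mem_compl_iff, Set.mem_singleton_iff] at hi
      rw [hτ, Equiv.swap_apply_def]
      split_ifs with h₁ h₂
      · simp only [h₁]; omega
      · simp only [h₂]; omega
      · rfl
    ext a
    simp only [vertex, Equiv.trans_apply, hlt]

/-- The first vertex may be reflected in the second one: as `n` is even, this does not leave the
cube. -/
lemma sum_vertex_eq_zero_of_dependsOn_Ioi (hn : Even n) (hN : 0 < N)
    (hF : DependsOn F (Set.Ioi 0)) : ∑ s ∈ gridSimplices N n, F (vertex s) = 0 := by
  let c (s : GridSimplex N) : Fin N := s.2.symm ⟨0, hN⟩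
  refine sum_eq_zero_of_involution
    (fun s => (Function.update s.1 (c s) (2 * (s.1 (c s)).2 - (s.1 (c s)).1, (s.1 (c s)).2), s.2))
    (fun s hs => mem_gridSimplices.2 fun a => ?_) (fun s hs h => ?_)
    (fun s _ => Prod.ext (by simp [c]) rfl) (fun s _ => hF fun i hi => ?_)
  · rw [mem_gridSimplices] at hs
    obtain rfl | ha := eq_or_ne a (c s)
    · simpa using reflect_even_mem_gridEdges hn (hs (c s))
    · simpa [ha] using hs a
  · have hfix := congrArg Prod.fst (congrFun (congrArg Prod.fst h) (c s))
    have hadj := (mem_gridEdges.1 (mem_gridSimplices.1 hs (c s))).2.2.2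
    simp only [Function.update_self] at hfix
    omega
  · rw [vertex_update]
    rw [if_pos (by simpa [c] using hi)]

variable {κ : Type*} [DecidableEq κ] {blk : Fin N → κ}

/-- The function `F` of the vertices of a simplex is not affected by flipping block `b` if all
vertices with numbers in `S` lie in the part of the boundary belonging to `b`. -/
def FlipInvariantOn (n : ℤ) (blk : Fin N → κ) (S : Set ℕ) (F : (ℕ → Fin N → ℤ) → ZMod 2) : Prop :=
  ∀ ⦃b v⦄, (∀ i ∈ S, OnBlockBoundary n blk b (v i)) → F (fun i => flipBlock blk b (v i)) = F v

/-- The last vertex may be reflected in the last but one, unless this leaves the cube. -/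
lemma sum_vertex_interior_eq_zero {c : Equiv.Perm (Fin N) → Fin N}
    (hc : ∀ σ : Equiv.Perm (Fin N), (σ (c σ) : ℕ) + 1 = N)
    (hF : DependsOn F (Set.Iio N)) :
    ∑ s ∈ gridSimplices N n with |(s.1 (c s.2)).1| ≠ n, F (vertex s) = 0 := by
  refine sum_eq_zero_of_involution (fun s => (Function.update s.1 (c s.2)
      ((s.1 (c s.2)).1, 2 * (s.1 (c s.2)).1 - (s.1 (c s.2)).2), s.2))
    (fun s hs => ?_) (fun s hs h => ?_) (fun s _ => Prod.ext (by simp) rfl)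
    (fun s hs => hF fun i hi => ?_) <;>
    obtain ⟨hs, hsn⟩ := Finset.mem_filter.1 hs
  · refine Finset.mem_filter.2 ⟨mem_gridSimplices.2 fun a => ?_, by simpa using hsn⟩
    rw [mem_gridSimplices] at hs
    obtain rfl | ha := eq_or_ne a (c s.2)
    · simpa using reflect_odd_mem_gridEdges (hs (c s.2)) hsn
    · simpa [ha] using hs a
  · have hfix := congrArg Prod.snd (congrFun (congrArg Prod.fst h) (c s.2))
    have hadj := (mem_gridEdges.1 (mem_gridSimplices.1 hs (c s.2))).2.2.2
    simp only [Function.update_self] at hfix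
    omega
  · rw [vertex_update]
    have := hc s.2
    rw [if_neg (by simp only [Set.mem_Iio] at hi; omega)]

/-- If the last facet lies in the boundary of the cube, it is moved by flipping a block. -/
lemma sum_vertex_boundary_eq_zero {c : Equiv.Perm (Fin N) → Fin N}
    (hc : ∀ σ : Equiv.Perm (Fin N), (σ (c σ) : ℕ) + 1 = N)
    (hn₀ : 0 < n) (hinv : FlipInvariantOn n blk (Set.Iio N) F) :
    ∑ s ∈ gridSimplices N n with |(s.1 (c s.2)).1| = n, F (vertex s) = 0 := by
  refine sum_eq_zero_of_involution (fun s => (flipBlock blk (blk (c s.2)) s.1, s.2))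
    (fun s hs => ?_) (fun s hs h => ?_) (fun s _ => Prod.ext (flipBlock_flipBlock _ _ _) rfl)
    (fun s hs => ?_) <;>
    obtain ⟨hs, hsn⟩ := Finset.mem_filter.1 hs
  · refine Finset.mem_filter.2 ⟨mem_gridSimplices.2 fun a => ?_, by simpa [flipBlock] using hsn⟩
    rw [mem_gridSimplices] at hs
    simp only [flipBlock]
    split_ifs
    exacts [neg_mem_gridEdges (hs a), hs a]
  · have hfix := congrArg Prod.fst (congrFun (congrArg Prod.fst h) (c s.2))
    simp only [flipBlock_apply_of_eq, Prod.fst_neg, neg_eq_self] at hfix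
    rw [hfix, abs_zero] at hsn
    exact hn₀.ne hsn
  · rw [← hinv fun i hi => ⟨abs_vertex_le hs i, c s.2, rfl, ?_⟩]
    · exact congrArg F (funext fun i => (vertex_flipBlock _ _ s i).symm)
    · have := hc s.2
      rw [vertex, if_neg (by simp only [Set.mem_Iio] at hi; omega), hsn]

lemma sum_vertex_eq_zero_of_flipInvariantOn (hn₀ : 0 < n) (hN : 0 < N)
    (hF : DependsOn F (Set.Iio N)) (hinv : FlipInvariantOn n blk (Set.Iio N) F) :
    ∑ s ∈ gridSimplices N n, F (vertex s) = 0 := by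
  let c (σ : Equiv.Perm (Fin N)) : Fin N := σ.symm ⟨N - 1, by omega⟩
  have hc (σ : Equiv.Perm (Fin N)) : (σ (c σ) : ℕ) + 1 = N := by
    simp only [c, Equiv.apply_symm_apply]; omega
  rw [← Finset.sum_filter_add_sum_filter_not _ fun s => |(s.1 (c s.2)).1| = n,
    sum_vertex_boundary_eq_zero hc hn₀ hinv, sum_vertex_interior_eq_zero hc hF, add_zero]

end Facets

section Parity

variable {κ : Type*} [DecidableEq κ] {blk : Fin N → κ} {L L' : ℕ → (Fin N → ℤ) → ZMod 2}
  {S : Set ℕ} {F G : (ℕ → Fin N → ℤ) → ZMod 2}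

lemma sum_eq_zero_of_eq_add {α : Type*} {S : Finset α} {f g h : α → ZMod 2}
    (hg : ∑ s ∈ S, g s = 0) (hh : ∑ s ∈ S, h s = 0) (hf : ∀ s ∈ S, f s = g s + h s) :
    ∑ s ∈ S, f s = 0 := by
  rw [Finset.sum_congr rfl hf, Finset.sum_add_distrib, hg, hh, add_zero]

/-- The cup product of the coboundaries of the labellings `L r`, for `r ∈ I`, on the simplex with
vertices `v`, where the `r`-th coboundary is evaluated on the `r`-th edge. -/
def cup (L : ℕ → (Fin N → ℤ) → ZMod 2) (I : Finset ℕ) (v : ℕ → Fin N → ℤ) : ZMod 2 :=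
  ∏ r ∈ I, (L r (v r) + L r (v (r + 1)))

lemma cup_congr {I : Finset ℕ} (h : ∀ r ∈ I, L r = L' r) : cup L I = cup L' I :=
  funext fun v => Finset.prod_congr rfl fun r hr => by rw [h r hr]

lemma cup_range_eq_mul {i : ℕ} (hi : i < N) (v : ℕ → Fin N → ℤ) :
    cup L (Finset.range N) v = cup L (Finset.range i) v * (L i (v i) + L i (v (i + 1))) *
      cup L (Finset.Ico (i + 1) N) v := by
  unfold cup
  rw [← Finset.prod_range_succ, Finset.prod_range_mul_prod_Ico _ hi]

lemma dependsOn_mul (hF : DependsOn F S) (hG : DependsOn G S) :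
    DependsOn (fun v => F v * G v) S :=
  fun _ _ h => congrArg₂ _ (hF h) (hG h)

lemma dependsOn_apply {i : ℕ} (hi : i ∈ S) (l : (Fin N → ℤ) → ZMod 2) :
    DependsOn (fun v : ℕ → Fin N → ℤ => l (v i)) S :=
  fun _ _ h => congrArg l (h i hi)

lemma dependsOn_cup {I : Finset ℕ} (hI : ∀ r ∈ I, r ∈ S ∧ r + 1 ∈ S) : DependsOn (cup L I) S :=
  fun _ _ h => Finset.prod_congr rfl fun r hr => by rw [h r (hI r hr).1, h (r + 1) (hI r hr).2]

lemma flipInvariantOn_mul (hF : FlipInvariantOn n blk S F) (hG : FlipInvariantOn n blk S G) :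
    FlipInvariantOn n blk S (fun v => F v * G v) :=
  fun _ _ h => congrArg₂ _ (hF h) (hG h)

lemma flipInvariantOn_apply_add_apply {τ : κ → ZMod 2} {l l' : (Fin N → ℤ) → ZMod 2}
    (hl : IsTwisted n blk τ l) (hl' : IsTwisted n blk τ l') {i j : ℕ} (hi : i ∈ S) (hj : j ∈ S) :
    FlipInvariantOn n blk S (fun v => l (v i) + l' (v j)) := fun b v h => by
  simp only [hl (h i hi), hl' (h j hj)]
  linear_combination CharTwo.add_self_eq_zero (τ b)

lemma flipInvariantOn_cup {T : ℕ → κ → ZMod 2} (hL : ∀ r, IsTwisted n blk (T r) (L r))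
    {I : Finset ℕ} (hI : ∀ r ∈ I, r ∈ S ∧ r + 1 ∈ S) : FlipInvariantOn n blk S (cup L I) :=
  fun _ _ h => Finset.prod_congr rfl fun r hr =>
    flipInvariantOn_apply_add_apply (hL r) (hL r) (hI r hr).1 (hI r hr).2 h

/-- Up to a sum over facets, which vanishes, the difference in the last factor of the cup product
may be replaced by its second term, which is absorbed by `F`. -/
lemma sum_cup_range_mul_eq_zero (hn : Even n) (L : ℕ → (Fin N → ℤ) → ZMod 2) {i : ℕ} (hi : i < N)
    (hF : DependsOn F (Set.Ioi i)) :
    ∑ s ∈ gridSimplices N n, cup L (Finset.range i) (vertex s) * F (vertex s) = 0 := by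
  induction i generalizing F with
  | zero => simpa [cup] using sum_vertex_eq_zero_of_dependsOn_Ioi hn hi hF
  | succ i ih =>
    have hlast := ih (F := fun v => L i (v (i + 1)) * F v) (by omega)
      (dependsOn_mul (dependsOn_apply (by simp) _) (hF.mono (Set.Ioi_subset_Ioi i.le_succ)))
    have hmiddle := sum_vertex_eq_zero_of_dependsOn_compl (n := n)
      (F := fun v => cup L (Finset.range i) v * L i (v i) * F v) (Nat.succ_pos i) hi
      (dependsOn_mul (dependsOn_mul (dependsOn_cup fun r hr => ?_) (dependsOn_apply (by simp) _))
        (hF.mono fun j hj => ?_))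
    · refine sum_eq_zero_of_eq_add hlast hmiddle fun s _ => ?_
      simp only [cup, Finset.prod_range_succ]
      ring
    · simp only [Finset.mem_range] at hr
      simp only [Set.mem_compl_iff, Set.mem_singleton_iff]
      omega
    · simp only [Set.mem_Ioi] at hj
      simp only [Set.mem_compl_iff, Set.mem_singleton_iff]
      omega

lemma sum_mul_cup_Ico_eq_zero (hn₀ : 0 < n) {T : ℕ → κ → ZMod 2}
    (hL : ∀ r, IsTwisted n blk (T r) (L r)) {i : ℕ} (hi : i < N)
    (hF : DependsOn F (Set.Iic i)) (hinv : FlipInvariantOn n blk (Set.Iic i) F) :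
    ∑ s ∈ gridSimplices N n, F (vertex s) * cup L (Finset.Ico (i + 1) N) (vertex s) = 0 := by
  induction h : N - 1 - i generalizing i F with
  | zero =>
    obtain rfl : N = i + 1 := by omega
    rw [← Order.Iio_succ, Order.succ_eq_add_one] at hF hinv
    simpa [cup] using sum_vertex_eq_zero_of_flipInvariantOn hn₀ (by omega) hF hinv
  | succ t ih =>
    have hsub : Set.Iic i ⊆ Set.Iic (i + 1) := Set.Iic_subset_Iic.2 i.le_succ
    have hfirst := ih (F := fun v => F v * (L (i + 1) (v i) + L (i + 1) (v (i + 1)))) (i := i + 1)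
      (by omega) (dependsOn_mul (hF.mono hsub) fun v w hvw => by simp [hvw i, hvw (i + 1)])
      (flipInvariantOn_mul (fun _ _ hv => hinv fun j hj => hv j (hsub hj))
        (flipInvariantOn_apply_add_apply (hL _) (hL _) (by simp) (by simp))) (by omega)
    have hmiddle := sum_vertex_eq_zero_of_dependsOn_compl (n := n)
      (F := fun v => F v * (L (i + 1) (v i) + L (i + 1) (v (i + 2))) *
        cup L (Finset.Ico (i + 2) N) v) i.succ_pos (by omega)
      (dependsOn_mul (dependsOn_mul (hF.mono fun j hj => ?_) fun v w hvw => by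
        simp [hvw i, hvw (i + 2)]) (dependsOn_cup fun r hr => ?_))
    · refine sum_eq_zero_of_eq_add hfirst hmiddle fun s _ => ?_
      have hsucc : cup L (Finset.Ico (i + 1) N) (vertex s) =
          (L (i + 1) (vertex s (i + 1)) + L (i + 1) (vertex s (i + 2))) *
            cup L (Finset.Ico (i + 2) N) (vertex s) :=
        Finset.prod_eq_prod_Ico_succ_bot (by omega) _
      rw [hsucc]
      linear_combination -F (vertex s) * cup L (Finset.Ico (i + 2) N) (vertex s) *
        CharTwo.add_self_eq_zero (L (i + 1) (vertex s i))
    · simp only [Set.mem_Iic] at hj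
      simp only [Set.mem_compl_iff, Set.mem_singleton_iff]
      omega
    · simp only [Finset.mem_Ico] at hr
      simp only [Set.mem_compl_iff, Set.mem_singleton_iff]
      omega

/-- The parity of the number of simplices on whose `r`-th edge the label `L r` changes, for every
`r < N`. -/
noncomputable def labelParity (n : ℤ) (L : ℕ → (Fin N → ℤ) → ZMod 2) : ZMod 2 :=
  ∑ s ∈ gridSimplices N n, cup L (Finset.range N) (vertex s)

/-- The difference of the cup products is the coboundary of the product with `L i + l` in place
of the `i`-th coboundary, and `L i + l` is invariant under flips. -/
lemma labelParity_update (hn : Even n) (hn₀ : 0 < n) {T : ℕ → κ → ZMod 2}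
    (hL : ∀ r, IsTwisted n blk (T r) (L r)) {i : ℕ} (hi : i < N) {l : (Fin N → ℤ) → ZMod 2}
    (hl : IsTwisted n blk (T i) l) : labelParity n (Function.update L i l) = labelParity n L := by
  have hrange {r : ℕ} (hr : r ∈ Finset.range i) : r ∈ Set.Iic i ∧ r + 1 ∈ Set.Iic i := by
    simp only [Finset.mem_range, Set.mem_Iic] at *
    omega
  have hIco {r : ℕ} (hr : r ∈ Finset.Ico (i + 1) N) : r ∈ Set.Ioi i ∧ r + 1 ∈ Set.Ioi i := by
    simp only [Finset.mem_Ico, Set.mem_Ioi] at *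
    omega
  have hlow := sum_cup_range_mul_eq_zero hn L hi
    (F := fun v => (L i (v (i + 1)) + l (v (i + 1))) * cup L (Finset.Ico (i + 1) N) v)
    (dependsOn_mul (dependsOn_apply (l := fun x => L i x + l x) (by simp))
      (dependsOn_cup fun r => hIco))
  have hhigh := sum_mul_cup_Ico_eq_zero hn₀ hL hi
    (F := fun v => cup L (Finset.range i) v * (L i (v i) + l (v i)))
    (dependsOn_mul (dependsOn_cup fun r => hrange)
      (dependsOn_apply (l := fun x => L i x + l x) (by simp)))
    (flipInvariantOn_mul (flipInvariantOn_cup hL fun r => hrange)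
      (flipInvariantOn_apply_add_apply (hL i) hl (by simp) (by simp)))
  rw [← CharTwo.add_eq_zero, labelParity, labelParity, ← Finset.sum_add_distrib]
  refine sum_eq_zero_of_eq_add hlow hhigh fun s _ => ?_
  rw [cup_range_eq_mul hi, cup_range_eq_mul hi, Function.update_self,
    cup_congr (L := Function.update L i l) (L' := L),
    cup_congr (L := Function.update L i l) (L' := L)]
  · ring
  all_goals
    intro r hr
    simp only [Finset.mem_range, Finset.mem_Ico] at hr
    exact Function.update_of_ne (by omega) _ _

theorem labelParity_congr (hn : Even n) (hn₀ : 0 < n) {T : ℕ → κ → ZMod 2}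
    (hL : ∀ r, IsTwisted n blk (T r) (L r)) (hL' : ∀ r, IsTwisted n blk (T r) (L' r)) :
    labelParity n L = labelParity n L' := by
  let M (i r : ℕ) : (Fin N → ℤ) → ZMod 2 := if r < i then L' r else L r
  have hM (i r : ℕ) : IsTwisted n blk (T r) (M i r) := by
    simp only [M]
    split_ifs
    exacts [hL' r, hL r]
  have hM_succ (i : ℕ) : M (i + 1) = Function.update (M i) i (L' i) := by
    ext1 r
    rcases lt_trichotomy r i with hr | rfl | hr
    · simp [M, hr.ne, hr, hr.trans i.lt_succ_self]
    · simp [M]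
    · simp [M, hr.ne', hr.not_gt, Nat.not_lt.2 (Nat.succ_le_of_lt hr)]
  have hparity : ∀ i ≤ N, labelParity n (M i) = labelParity n L := fun i hi => by
    induction i with
    | zero => simp [M]
    | succ i ih => rw [hM_succ, labelParity_update hn hn₀ (hM i) (by omega) (hL' i), ih (by omega)]
  rw [← hparity N le_rfl]
  exact Finset.sum_congr rfl fun s _ => congrFun (cup_congr fun r hr => by simp_all [M]) _

lemma isTwisted_extend {T : Fin N → κ → ZMod 2}
    {L : Fin N → (Fin N → ℤ) → ZMod 2} (hL : ∀ a, IsTwisted n blk (T a) (L a))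
    (r : ℕ) : IsTwisted n blk (Function.extend Fin.val T 0 r) (Function.extend Fin.val L 0 r) := by
  by_cases hr : ∃ a : Fin N, a.1 = r
  · obtain ⟨a, rfl⟩ := hr
    simpa only [Fin.val_injective.extend_apply] using hL a
  · rw [Function.extend_apply' _ _ _ hr, Function.extend_apply' _ _ _ hr]
    exact fun _ _ _ => (add_zero _).symm

end Parity

end Grid

section ReferenceLabel

variable {N : ℕ} {n : ℤ} {κ : Type*} {blk : Fin N → κ} {b b' : κ} {x : Fin N → ℤ}

/-- The sign of an integer as an element of `ZMod 2`, which is `1` for negative integers. -/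
def negBit (z : ℤ) : ZMod 2 := if z < 0 then 1 else 0

lemma negBit_neg {z : ℤ} (hz : z ≠ 0) : negBit (-z) = negBit z + 1 := by
  unfold negBit
  rcases hz.lt_or_gt with h | h
  · rw [if_neg (by omega), if_pos h, CharTwo.add_self_eq_zero]
  · rw [if_pos (by omega), if_neg (by omega), zero_add]

/-- The coordinates in block `b` at which `x` lies on the boundary of the cube `[-n, n]^N`. -/
def faceCoords (n : ℤ) (blk : Fin N → κ) (b : κ) (x : Fin N → ℤ) : Set (Fin N) :=
  {a | blk a = b ∧ |x a| = n}

open scoped Classical in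
/-- The sign of `x` at a coordinate in `S`, chosen depending on `S` only, or `0` if `S` is empty. -/
noncomputable def signOn (S : Set (Fin N)) (x : Fin N → ℤ) : ZMod 2 :=
  if h : S.Nonempty then negBit (x h.some) else 0

/-- The sign of `x` at a coordinate in block `b` which lies on the boundary of the cube, or `0` if
there is none. -/
noncomputable def blockSign (n : ℤ) (blk : Fin N → κ) (b : κ) (x : Fin N → ℤ) : ZMod 2 :=
  signOn (faceCoords n blk b x) x

lemma blockSign_eq_zero (h : ∀ a, blk a = b → |x a| ≠ n) : blockSign n blk b x = 0 :=
  dif_neg fun ⟨a, ha, hxa⟩ => h a ha hxa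

section FlipBlock

variable [DecidableEq κ]

lemma faceCoords_flipBlock (n : ℤ) (blk : Fin N → κ) (b b' : κ) (x : Fin N → ℤ) :
    faceCoords n blk b' (flipBlock blk b x) = faceCoords n blk b' x := by
  simp [faceCoords]

lemma blockSign_flipBlock_of_ne (h : b' ≠ b) :
    blockSign n blk b' (flipBlock blk b x) = blockSign n blk b' x := by
  rw [blockSign, faceCoords_flipBlock, blockSign, signOn, signOn]
  split_ifs with hx
  · rw [flipBlock_apply_of_ne (hx.some_mem.1.trans_ne h)]
  · rfl

lemma blockSign_flipBlock_self (hn₀ : 0 < n) (hx : OnBlockBoundary n blk b x) :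
    blockSign n blk b (flipBlock blk b x) = blockSign n blk b x + 1 := by
  have hface : (faceCoords n blk b x).Nonempty := hx.2
  rw [blockSign, faceCoords_flipBlock, blockSign, signOn, signOn, dif_pos hface, dif_pos hface,
    flipBlock_apply_of_eq hface.some_mem.1, negBit_neg]
  exact abs_pos.1 (hn₀.trans_eq hface.some_mem.2.symm)

end FlipBlock

/-- In the interior of the cube, the label of `x` is the sign of its coordinate `a`; the block
signs give it the twist `T a`. -/
noncomputable def refLabel [DecidableEq κ] (n : ℤ) (blk : Fin N → κ) (T : Fin N → κ → ZMod 2)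
    (a : Fin N) (x : Fin N → ℤ) : ZMod 2 :=
  ∑ b ∈ Finset.univ.image blk, T a b * blockSign n blk b x +
    if x a = 0 then 0 else negBit (x a) + blockSign n blk (blk a) x

variable [DecidableEq κ] {T : Fin N → κ → ZMod 2} {a : Fin N}

lemma isTwisted_refLabel (hn₀ : 0 < n) (a : Fin N) :
    IsTwisted n blk (T a) (refLabel n blk T a) := by
  intro b x hx
  have hb : b ∈ Finset.univ.image blk :=
    hx.2.elim fun c hc => Finset.mem_image.2 ⟨c, Finset.mem_univ c, hc.1⟩
  have hsum : ∑ b' ∈ Finset.univ.image blk, T a b' * blockSign n blk b' (flipBlock blk b x) =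
      ∑ b' ∈ Finset.univ.image blk, T a b' * blockSign n blk b' x + T a b := by
    rw [← Finset.add_sum_erase _ _ hb, ← Finset.add_sum_erase (Finset.univ.image blk)
      (fun b' => T a b' * blockSign n blk b' x) hb,
      blockSign_flipBlock_self hn₀ hx, Finset.sum_congr rfl fun b' hb' => by
        rw [blockSign_flipBlock_of_ne (Finset.ne_of_mem_erase hb')]]
    ring
  have hcorrection : negBit (flipBlock blk b x a) + blockSign n blk (blk a) (flipBlock blk b x) =
      negBit (x a) + blockSign n blk (blk a) x ∨ x a = 0 := by
    refine or_iff_not_imp_right.2 fun hxa => ?_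
    obtain rfl | hab := eq_or_ne (blk a) b
    · rw [flipBlock_apply_of_eq rfl, negBit_neg hxa, blockSign_flipBlock_self hn₀ hx]
      linear_combination CharTwo.add_self_eq_zero (1 : ZMod 2)
    · rw [flipBlock_apply_of_ne hab, blockSign_flipBlock_of_ne hab]
  have hzero : flipBlock blk b x a = 0 ↔ x a = 0 := by
    rw [← abs_eq_zero, abs_flipBlock_apply, abs_eq_zero]
  unfold refLabel
  rw [hsum]
  rcases hcorrection with h | h <;> simp only [hzero, h, if_true] <;> ring

lemma refLabel_eq_negBit_of_forall_abs_ne (h : ∀ c, |x c| ≠ n) :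
    refLabel n blk T a x = negBit (x a) := by
  have hsign (b : κ) : blockSign n blk b x = 0 := blockSign_eq_zero fun c _ => h c
  rw [refLabel]
  split_ifs with ha <;> simp [hsign, ha, negBit]

/-- The matrix `T` of twists is triangular with respect to the order of the blocks, with ones on
the diagonal: the coordinate `a` is twisted by its own block, but not by larger blocks. -/
structure IsTriangular {ι κ : Type*} [LT κ] (blk : ι → κ) (T : ι → κ → ZMod 2) : Prop where
  apply_self : ∀ a, T a (blk a) = 1
  apply_eq_zero : ∀ a b, blk a < b → T a b = 0

variable {κ : Type*} [LinearOrder κ] {blk : Fin N → κ} {T : Fin N → κ → ZMod 2}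

lemma refLabel_eq_negBit_of_ne_zero (hT : IsTriangular blk T) {a : Fin N}
    (hx : ∀ b < blk a, blockSign n blk b x = 0) (hxa : x a ≠ 0) :
    refLabel n blk T a x = negBit (x a) := by
  have hsum : ∑ b ∈ Finset.univ.image blk, T a b * blockSign n blk b x =
      blockSign n blk (blk a) x := by
    rw [Finset.sum_eq_single (blk a), hT.apply_self, one_mul]
    · intro b _ hb
      rcases hb.lt_or_gt with h | h
      · rw [hx b h, mul_zero]
      · rw [hT.apply_eq_zero a b h, zero_mul]
    · simp
  rw [refLabel, hsum, if_neg hxa]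
  linear_combination CharTwo.add_self_eq_zero (blockSign n blk (blk a) x)

/-- Every label of the simplex `s` changes on one edge: the label `L a` changes on the edge between
the vertices `a` and `a + 1`. -/
def IsFullyLabelled (L : Fin N → (Fin N → ℤ) → ZMod 2) (s : GridSimplex N) : Prop :=
  ∀ a : Fin N, L a (vertex s a) ≠ L a (vertex s (a + 1))

lemma cup_extend_ne_zero_iff {L : Fin N → (Fin N → ℤ) → ZMod 2} {s : GridSimplex N} :
    cup (Function.extend Fin.val L 0) (Finset.range N) (vertex s) ≠ 0 ↔ IsFullyLabelled L s := by
  simp [cup, Finset.prod_range, Fin.val_injective.extend_apply, Finset.prod_ne_zero_iff,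
    IsFullyLabelled, CharTwo.add_eq_zero]

lemma gridEdges_boundary (hn : Even n) (hn₀ : 0 < n) {q : ℤ × ℤ} (hq : q ∈ gridEdges n)
    (hqn : |q.1| = n ∨ |q.2| = n) : q.1 ≠ 0 ∧ q.2 ≠ 0 ∧ (q.1 < 0 ↔ q.2 < 0) := by
  obtain ⟨h₁, h₂, ⟨r, hr⟩, h₃⟩ := mem_gridEdges.1 hq
  obtain ⟨m, rfl⟩ := hn
  rw [abs_eq hn₀.le, abs_eq hn₀.le] at hqn
  omega

lemma vertex_apply_eq_or_eq (s : GridSimplex N) (j : ℕ) (a : Fin N) :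
    vertex s j a = (s.1 a).1 ∨ vertex s j a = (s.1 a).2 := by
  unfold vertex
  split_ifs
  exacts [.inr rfl, .inl rfl]

/-- If `a` is a coordinate of a minimal block reaching the boundary, its label would be the sign of
this coordinate, which is constant on `s`. -/
lemma abs_vertex_ne_of_isFullyLabelled (hn : Even n) (hn₀ : 0 < n) (hT : IsTriangular blk T)
    {s : GridSimplex N} (hs : s ∈ gridSimplices N n) (hfull : IsFullyLabelled (refLabel n blk T) s)
    (j : ℕ) (a : Fin N) : |vertex s j a| ≠ n := by
  induction a using (Finite.wellFounded_of_trans_of_irrefl (InvImage (· < ·) blk)).induction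
    generalizing j with | _ a ih => ?_
  intro hj
  obtain ⟨h₁, h₂, hsign⟩ := gridEdges_boundary hn hn₀ (mem_gridSimplices.1 hs a) <| by
    simpa only [eq_comm, hj] using
      (vertex_apply_eq_or_eq s j a).imp (congrArg abs) (congrArg abs)
  have hlabel (i : ℕ) : refLabel n blk T a (vertex s i) = negBit (s.1 a).1 := by
    rw [refLabel_eq_negBit_of_ne_zero hT fun b hb =>
      blockSign_eq_zero fun c hc => ih c (hc.trans_lt hb) i]
    all_goals rcases vertex_apply_eq_or_eq s i a with hi | hi <;> rw [hi]
    exacts [by simp only [negBit, hsign], h₁, h₂]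
  exact hfull a ((hlabel a).trans (hlabel (a + 1)).symm)

/-- The simplex with the edges from `0` to `-1` and the standard order of the coordinates. -/
def baseSimplex (N : ℕ) : GridSimplex N := (fun _ => (0, -1), 1)

lemma eq_baseSimplex_of_negBit_ne {s : GridSimplex N} (hs : s ∈ gridSimplices N n)
    (h : ∀ a : Fin N, negBit (vertex s a a) ≠ negBit (vertex s (a + 1) a)) : s = baseSimplex N := by
  have hcoord (a : Fin N) : s.2 a = a ∧ s.1 a = (0, -1) := by
    obtain ⟨-, -, ⟨m, hm⟩, hadj⟩ := mem_gridEdges.1 (mem_gridSimplices.1 hs a)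
    have hpos : (s.2 a : ℕ) = a := by
      by_contra hne
      refine h a (congrArg negBit ?_)
      simp only [vertex, Nat.lt_add_one_iff_lt_or_eq, hne, or_false]
    refine ⟨Fin.ext hpos, ?_⟩
    have ha := h a
    rw [vertex, if_neg hpos.not_lt, vertex, if_pos (by omega)] at ha
    simp only [negBit] at ha
    split_ifs at ha with h₁ h₂ h₂
    · exact absurd rfl ha
    · omega
    · exact Prod.ext (show (s.1 a).1 = 0 by omega) (show (s.1 a).2 = -1 by omega)
    · exact absurd rfl ha
  exact Prod.ext (funext fun a => (hcoord a).2) (Equiv.ext fun a => (hcoord a).1)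

lemma baseSimplex_mem_gridSimplices (hn₀ : 0 < n) : baseSimplex N ∈ gridSimplices N n :=
  mem_gridSimplices.2 fun _ => mem_gridEdges.2 ⟨by simp [baseSimplex, hn₀.le],
    by simp only [baseSimplex]; omega, by simp [baseSimplex], by simp [baseSimplex]⟩

lemma isFullyLabelled_refLabel_iff (hn : Even n) (hn₀ : 0 < n) (hT : IsTriangular blk T)
    {s : GridSimplex N} (hs : s ∈ gridSimplices N n) :
    IsFullyLabelled (refLabel n blk T) s ↔ s = baseSimplex N := by
  refine ⟨fun h => eq_baseSimplex_of_negBit_ne hs fun a => ?_, ?_⟩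
  · have ha := h a
    rwa [refLabel_eq_negBit_of_forall_abs_ne (abs_vertex_ne_of_isFullyLabelled hn hn₀ hT hs h _),
      refLabel_eq_negBit_of_forall_abs_ne (abs_vertex_ne_of_isFullyLabelled hn hn₀ hT hs h _)] at ha
  · rintro rfl a
    have hinterior (j : ℕ) (c : Fin N) : |vertex (baseSimplex N) j c| ≠ n := by
      obtain ⟨m, rfl⟩ := hn
      rcases vertex_apply_eq_or_eq (baseSimplex N) j c with h | h <;> rw [h] <;>
        simp only [baseSimplex, abs_zero, abs_neg, abs_one] <;> omega
    rw [refLabel_eq_negBit_of_forall_abs_ne (hinterior _),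
      refLabel_eq_negBit_of_forall_abs_ne (hinterior _)]
    simp [vertex, baseSimplex, negBit]

lemma labelParity_refLabel (hn : Even n) (hn₀ : 0 < n) (hT : IsTriangular blk T) :
    labelParity n (Function.extend Fin.val (refLabel n blk T) 0) = 1 := by
  rw [labelParity, Finset.sum_eq_single (baseSimplex N)]
  · exact Fin.eq_one_of_ne_zero _ <| cup_extend_ne_zero_iff.2 <|
      (isFullyLabelled_refLabel_iff hn hn₀ hT (baseSimplex_mem_gridSimplices hn₀)).2 rfl
  · refine fun s hs hne => not_ne_iff.1 fun h => hne ?_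
    exact (isFullyLabelled_refLabel_iff hn hn₀ hT hs).1 (cup_extend_ne_zero_iff.1 h)
  · exact fun h => absurd (baseSimplex_mem_gridSimplices hn₀) h

theorem exists_isFullyLabelled (hn : Even n) (hn₀ : 0 < n) (hT : IsTriangular blk T)
    {L : Fin N → (Fin N → ℤ) → ZMod 2} (hL : ∀ a, IsTwisted n blk (T a) (L a)) :
    ∃ s ∈ gridSimplices N n, IsFullyLabelled L s := by
  have hparity : labelParity n (Function.extend Fin.val L 0) ≠ 0 := by
    rw [labelParity_congr hn hn₀ (isTwisted_extend hL)
      (isTwisted_extend (isTwisted_refLabel hn₀)), labelParity_refLabel hn hn₀ hT]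
    exact one_ne_zero
  obtain ⟨s, hs, hcup⟩ := Finset.exists_ne_zero_of_sum_ne_zero hparity
  exact ⟨s, hs, cup_extend_ne_zero_iff.1 hcup⟩

end ReferenceLabel

section SignLabel

variable {ι κ : Type*} {blk : ι → κ} {n : ℤ}

/-- The function `f` on the cube `[-1, 1]^ι` is even or odd under flipping block `b` on the boundary
part belonging to `b`, according to whether `τ b` is `0` or `1`. -/
def IsTwistedOdd [DecidableEq κ] (blk : ι → κ) (τ : κ → ZMod 2) (f : (ι → ℝ) → ℝ) : Prop :=
  ∀ ⦃b x⦄, OnBlockBoundary 1 blk b x → f (flipBlock blk b x) = if τ b = 0 then f x else -f x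

/-- The point of the cube `[-1, 1]^ι` corresponding to the grid point `z` of `[-n, n]^ι`. -/
noncomputable def rescale (n : ℤ) (z : ι → ℤ) : ι → ℝ := fun a => z a / n

lemma rescale_flipBlock [DecidableEq κ] (n : ℤ) (blk : ι → κ) (b : κ) (z : ι → ℤ) :
    rescale n (flipBlock blk b z) = flipBlock blk b (rescale n z) := by
  ext a
  by_cases h : blk a = b <;> simp [rescale, flipBlock, h, neg_div]

lemma abs_rescale_sub_rescale (hn₀ : 0 < n) (z w : ι → ℤ) (a : ι) :
    |rescale n z a - rescale n w a| = |z a - w a| / n := by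
  rw [rescale, rescale, ← sub_div, abs_div, abs_of_pos (Int.cast_pos.2 hn₀ : (0 : ℝ) < n)]
  push_cast
  rfl

lemma abs_rescale (hn₀ : 0 < n) (z : ι → ℤ) (a : ι) : |rescale n z a| = |z a| / n := by
  simpa [rescale] using abs_rescale_sub_rescale hn₀ z 0 a

lemma abs_rescale_le_one (hn₀ : 0 < n) {z : ι → ℤ} {a : ι} (hz : |z a| ≤ n) :
    |rescale n z a| ≤ 1 := by
  rw [abs_rescale hn₀, div_le_one (by positivity)]
  exact_mod_cast hz

lemma onBlockBoundary_rescale (hn₀ : 0 < n) {b : κ} {z : ι → ℤ} (hz : OnBlockBoundary n blk b z) :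
    OnBlockBoundary 1 blk b (rescale n z) := by
  obtain ⟨hz, a, ha, hza⟩ := hz
  refine ⟨fun c => abs_rescale_le_one hn₀ (hz c), a, ha, ?_⟩
  rw [abs_rescale hn₀, hza, div_self (by positivity)]

/-- The label of a grid point given by the sign of `f`, where `l` decides if `f` vanishes. -/
noncomputable def signLabel (n : ℤ) (f : (ι → ℝ) → ℝ) (l : (ι → ℤ) → ZMod 2) (z : ι → ℤ) : ZMod 2 :=
  if f (rescale n z) < 0 then 1 else if 0 < f (rescale n z) then 0 else l z

lemma isTwisted_signLabel [DecidableEq κ] (hn₀ : 0 < n) {τ : κ → ZMod 2} {f : (ι → ℝ) → ℝ}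
    (hf : IsTwistedOdd blk τ f) {l : (ι → ℤ) → ZMod 2} (hl : IsTwisted n blk τ l) :
    IsTwisted n blk τ (signLabel n f l) := by
  intro b z hz
  rw [signLabel, signLabel, rescale_flipBlock, hf (onBlockBoundary_rescale hn₀ hz), hl hz]
  rcases eq_or_ne (τ b) 0 with hτ | hτ
  · simp [hτ]
  · have hτ₁ : τ b = 1 := Fin.eq_one_of_ne_zero _ hτ
    simp only [hτ₁, one_ne_zero, if_false, neg_lt_zero, neg_pos]
    rcases lt_trichotomy (f (rescale n z)) 0 with h | h | h
    · rw [if_neg h.not_gt, if_pos h, if_pos h, CharTwo.add_self_eq_zero]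
    · simp [h]
    · rw [if_pos h, if_neg h.not_gt, if_pos h, zero_add]

lemma mul_nonpos_of_signLabel_ne {f : (ι → ℝ) → ℝ} {l : (ι → ℤ) → ZMod 2} {z w : ι → ℤ}
    (h : signLabel n f l z ≠ signLabel n f l w) : f (rescale n z) * f (rescale n w) ≤ 0 := by
  contrapose! h
  unfold signLabel
  rcases pos_and_pos_or_neg_and_neg_of_mul_pos h with ⟨hz, hw⟩ | ⟨hz, hw⟩
  · rw [if_neg hz.not_gt, if_neg hw.not_gt, if_pos hz, if_pos hw]
  · rw [if_pos hz, if_pos hw]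

end SignLabel

section ContinuousZero

variable {κ : Type*} [LinearOrder κ]

lemma exists_forall_mul_nonpos {N : ℕ} {blk : Fin N → κ} {T : Fin N → κ → ZMod 2}
    (hT : IsTriangular blk T) {f : Fin N → (Fin N → ℝ) → ℝ}
    (hf : ∀ a, IsTwistedOdd blk (T a) (f a)) {n : ℤ} (hn : Even n) (hn₀ : 0 < n) :
    ∃ y : ℕ → Fin N → ℝ, (∀ j a, |y j a| ≤ 1) ∧ (∀ j a, |y j a - y 0 a| ≤ 1 / n) ∧
      ∀ a : Fin N, f a (y a) * f a (y (a + 1)) ≤ 0 := by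
  obtain ⟨s, hs, hfull⟩ := exists_isFullyLabelled hn hn₀ hT fun a =>
    isTwisted_signLabel hn₀ (hf a) (isTwisted_refLabel hn₀ a)
  refine ⟨fun j => rescale n (vertex s j), fun j a => abs_rescale_le_one hn₀ (abs_vertex_le hs j a),
    fun j a => ?_, fun a => mul_nonpos_of_signLabel_ne (hfull a)⟩
  rw [abs_rescale_sub_rescale hn₀]
  gcongr
  exact_mod_cast abs_vertex_sub_vertex_le hs j 0 a

lemma exists_forall_eq_zero_fin {N : ℕ} {blk : Fin N → κ} {T : Fin N → κ → ZMod 2}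
    (hT : IsTriangular blk T) {f : Fin N → (Fin N → ℝ) → ℝ} (hcont : ∀ a, Continuous (f a))
    (hf : ∀ a, IsTwistedOdd blk (T a) (f a)) : ∃ x : Fin N → ℝ, ∀ a, f a x = 0 := by
  choose y hy_le hy_sub hy_mul using fun q : ℕ =>
    exists_forall_mul_nonpos hT hf (n := 2 * (q + 1)) (by simp) (by omega)
  obtain ⟨x, -, φ, hφ, hx⟩ := (isCompact_univ_pi fun _ : Fin N => isCompact_Icc).tendsto_subseq
    (x := fun q => y q 0) fun q a _ => abs_le.1 (hy_le q 0 a)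
  have hmesh : Tendsto (fun q : ℕ => (1 : ℝ) / ((2 * (q + 1) : ℤ) : ℝ)) atTop (𝓝 0) := by
    have := (tendsto_one_div_add_atTop_nhds_zero_nat (𝕜 := ℝ)).const_mul (1 / 2)
    rw [mul_zero] at this
    refine this.congr fun q => ?_
    push_cast
    field_simp
  have hlim (j : ℕ) : Tendsto (fun q => y (φ q) j) atTop (𝓝 x) := by
    rw [tendsto_pi_nhds] at hx ⊢
    intro a
    have hdiff : Tendsto (fun q => y (φ q) j a - y (φ q) 0 a) atTop (𝓝 0) :=
      squeeze_zero_norm (fun q => hy_sub (φ q) j a) (hmesh.comp hφ.tendsto_atTop)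
    simpa using hdiff.add (hx a)
  refine ⟨x, fun a => mul_self_eq_zero.1 (le_antisymm ?_ (mul_self_nonneg _))⟩
  exact le_of_tendsto' ((((hcont a).tendsto x).comp (hlim a)).mul
    (((hcont a).tendsto x).comp (hlim (a + 1)))) fun q => hy_mul (φ q) a

theorem exists_forall_eq_zero {ι : Type*} [Finite ι] {blk : ι → κ} {T : ι → κ → ZMod 2}
    (hT : IsTriangular blk T) {f : ι → (ι → ℝ) → ℝ} (hcont : ∀ a, Continuous (f a))
    (hf : ∀ a, IsTwistedOdd blk (T a) (f a)) : ∃ x : ι → ℝ, ∀ a, f a x = 0 := by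
  let e := Finite.equivFin ι
  have htwist (a : Fin (Nat.card ι)) :
      IsTwistedOdd (blk ∘ e.symm) (T (e.symm a)) fun x => f (e.symm a) (x ∘ e) := by
    rintro b x ⟨hx, c, hc, hxc⟩
    have hflip : flipBlock (blk ∘ e.symm) b x ∘ e = flipBlock blk b (x ∘ e) := by
      ext c
      simp [flipBlock]
    simp only [hflip]
    exact hf _ ⟨fun _ => hx _, e.symm c, hc, by simpa using hxc⟩
  obtain ⟨x, hx⟩ := exists_forall_eq_zero_fin
    ⟨fun a => hT.apply_self _, fun a b h => hT.apply_eq_zero _ b h⟩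
    (fun a => (hcont _).comp (by fun_prop)) htwist
  exact ⟨x ∘ e, fun a => by simpa using hx (e a)⟩

end ContinuousZero

section Hemisphere

variable {ι E : Type*} [Fintype ι] [NormedAddCommGroup E] [NormedSpace ℝ E] {v : Option ι → E}
  {x : ι → ℝ}

/-- A map from the cube `[-1, 1]^ι` to the unit sphere of the span of `v` which maps antipodal
points of the boundary to antipodal points, as the inclusion of the boundary of a hemisphere
does. -/
noncomputable def hemisphere (v : Option ι → E) (x : ι → ℝ) : E :=
  NormedSpace.normalize (∑ j, x j • v (some j) + (1 - ‖x‖) • v none)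

lemma sum_add_smul_none_ne_zero (hv : LinearIndependent ℝ v) (x : ι → ℝ) :
    ∑ j, x j • v (some j) + (1 - ‖x‖) • v none ≠ 0 := by
  intro h
  have hcoeff := Fintype.linearIndependent_iff.1 hv (fun o => o.elim (1 - ‖x‖) x)
    (by rwa [Fintype.sum_option, add_comm])
  have hx : x = 0 := funext fun j => hcoeff (some j)
  simpa [hx] using hcoeff none

lemma continuous_hemisphere (hv : LinearIndependent ℝ v) : Continuous (hemisphere v) := by
  have hcont : Continuous fun x : ι → ℝ => ∑ j, x j • v (some j) + (1 - ‖x‖) • v none := by fun_prop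
  exact (hcont.norm.inv₀ fun x => norm_ne_zero_iff.2 (sum_add_smul_none_ne_zero hv x)).smul hcont

lemma norm_hemisphere (hv : LinearIndependent ℝ v) (x : ι → ℝ) : ‖hemisphere v x‖ = 1 :=
  NormedSpace.norm_normalize_eq_one_iff.2 (sum_add_smul_none_ne_zero hv x)

lemma hemisphere_neg (v : Option ι → E) (hx : ‖x‖ = 1) : hemisphere v (-x) = -hemisphere v x := by
  simp [hemisphere, hx, ← NormedSpace.normalize_neg]

end Hemisphere

section Frame

variable {γ ι E : Type*} [LinearOrder ι] [NormedAddCommGroup E]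
  [InnerProductSpace ℝ E]

/-- The coordinates parametrizing the family of unit vectors `frame e x i`, for `i : ι`: the `i`-th
vector has one coordinate for each element of `γ` and for each of its predecessors. -/
abbrev FrameCoord (γ ι : Type*) [LinearOrder ι] : Type _ := (i : ι) × (γ ⊕ {j // j < i})

/-- The twist of the functions `frameDefect C`. -/
def frameTwist : FrameCoord γ ι → ι → ZMod 2
  | ⟨i, .inl _⟩, b => if b = i then 1 else 0
  | ⟨i, .inr j⟩, b => if b = i ∨ b = j then 1 else 0

lemma isTriangular_frameTwist :
    IsTriangular Sigma.fst (frameTwist : FrameCoord γ ι → ι → ZMod 2) where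
  apply_self := by rintro ⟨i, _ | _⟩ <;> simp [frameTwist]
  apply_eq_zero := by
    rintro ⟨i, _ | j⟩ b hb <;> simp only [frameTwist]
    · exact if_neg hb.ne'
    · exact if_neg (not_or.2 ⟨hb.ne', (j.2.trans hb).ne'⟩)

/-- The functions of the family `W` of unit vectors which have to vanish for `W` to be orthonormal
and for the functions `C c` to vanish. -/
def frameDefect (C : γ → (ι → E) → ι → ℝ) (W : ι → E) : FrameCoord γ ι → ℝ
  | ⟨i, .inl c⟩ => C c W i
  | ⟨i, .inr j⟩ => ⟪W i, W j⟫_ℝ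

lemma continuous_frameDefect {C : γ → (ι → E) → ι → ℝ} (hC : ∀ c, Continuous (C c))
    (a : FrameCoord γ ι) : Continuous fun W => frameDefect C W a := by
  obtain ⟨i, c | j⟩ := a <;> simp only [frameDefect] <;> fun_prop

lemma frameDefect_flipBlock {C : γ → (ι → E) → ι → ℝ}
    (hC : ∀ c b W, C c (flipBlock id b W) = flipBlock id b (C c W)) (a : FrameCoord γ ι) (b : ι)
    (W : ι → E) : frameDefect C (flipBlock id b W) a =
      if frameTwist a b = 0 then frameDefect C W a else -frameDefect C W a := by
  obtain ⟨i, c | ⟨j, hj⟩⟩ := a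
  · by_cases hi : i = b <;> simp [frameDefect, frameTwist, hC, flipBlock, hi, @eq_comm _ b i]
  · by_cases hi : i = b
    · have hjb : j ≠ b := hi ▸ hj.ne
      simp [frameDefect, frameTwist, flipBlock, hi, hjb]
    · by_cases hjb : j = b <;>
        simp [frameDefect, frameTwist, flipBlock, hi, hjb, @eq_comm _ b i, @eq_comm _ b j]

lemma linearIndependent_comp_sumMap {e : γ ⊕ ι → E} (he : LinearIndependent ℝ e) (i : ι) :
    LinearIndependent ℝ fun o : Option (γ ⊕ {j // j < i}) =>
      e (o.elim (.inr i) (Sum.map id Subtype.val)) := by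
  refine he.comp _ ?_
  rintro (_ | _ | ⟨j, hj⟩) (_ | _ | ⟨j', hj'⟩) h <;>
    simp_all [ne_of_lt, ne_of_gt]

variable [Fintype γ] [Fintype ι] {e : γ ⊕ ι → E}

/-- Unit vectors of which the `i`-th one lies in the span of the `e (inl c)` and the `e (inr j)`
for `j ≤ i`. -/
noncomputable def frame (e : γ ⊕ ι → E) (x : FrameCoord γ ι → ℝ) (i : ι) : E :=
  hemisphere (fun o => e (o.elim (.inr i) (Sum.map id Subtype.val))) fun a => x ⟨i, a⟩

lemma continuous_frame (he : LinearIndependent ℝ e) : Continuous (frame e) :=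
  continuous_pi fun i =>
    (continuous_hemisphere (linearIndependent_comp_sumMap he i)).comp (by fun_prop)

lemma norm_frame (he : LinearIndependent ℝ e) (x : FrameCoord γ ι → ℝ) (i : ι) :
    ‖frame e x i‖ = 1 :=
  norm_hemisphere (linearIndependent_comp_sumMap he i) _

lemma frame_flipBlock (e : γ ⊕ ι → E) {b : ι} {x : FrameCoord γ ι → ℝ}
    (hx : OnBlockBoundary 1 Sigma.fst b x) :
    frame e (flipBlock Sigma.fst b x) = flipBlock id b (frame e x) := by
  ext1 i
  obtain rfl | hi := eq_or_ne i b
  · rw [flipBlock_apply_of_eq (blk := id) (b := i) rfl]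
    obtain ⟨hx, ⟨_, a⟩, rfl, hxa⟩ := hx
    rw [frame, frame, ← hemisphere_neg]
    · exact congrArg _ (funext fun _ => flipBlock_apply_of_eq rfl x)
    · exact le_antisymm ((pi_norm_le_iff_of_nonneg zero_le_one).2 fun _ => hx _)
        (hxa.symm.trans_le (norm_le_pi_norm (fun a => x ⟨_, a⟩) a))
  · simp [frame, flipBlock, hi]

theorem exists_orthonormal_forall_eq_zero [FiniteDimensional ℝ E]
    (hE : Module.finrank ℝ E = Fintype.card γ + Fintype.card ι) {C : γ → (ι → E) → ι → ℝ}
    (hC : ∀ c, Continuous (C c))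
    (hodd : ∀ c b W, C c (flipBlock id b W) = flipBlock id b (C c W)) :
    ∃ W : ι → E, Orthonormal ℝ W ∧ ∀ c, C c W = 0 := by
  let e : Module.Basis (γ ⊕ ι) ℝ E := (Module.finBasisOfFinrankEq ℝ E hE).reindex <|
    finSumFinEquiv.symm.trans <| (Fintype.equivFin γ).symm.sumCongr (Fintype.equivFin ι).symm
  obtain ⟨x, hx⟩ := exists_forall_eq_zero (isTriangular_frameTwist (γ := γ) (ι := ι))
    (f := fun a x => frameDefect C (frame e x) a)
    (fun a => (continuous_frameDefect hC a).comp (continuous_frame e.linearIndependent))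
    fun a b x hx => by
      simp only [frame_flipBlock _ hx, frameDefect_flipBlock hodd]
  have hlt {i j : ι} (h : j < i) : ⟪frame e x i, frame e x j⟫_ℝ = 0 := hx ⟨i, .inr ⟨j, h⟩⟩
  refine ⟨frame e x, ⟨norm_frame e.linearIndependent x, fun i j hij => ?_⟩,
    fun c => funext fun i => hx ⟨i, .inl c⟩⟩
  rcases hij.lt_or_gt with h | h
  exacts [(real_inner_comm _ _).trans (hlt h), hlt h]

end Frame

section Centerpoint

variable {F : Type*} [NormedAddCommGroup F] [NormedSpace ℝ F] [FiniteDimensional ℝ F]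
  [MeasurableSpace F]

theorem exists_forall_mem_of_isCompact_of_convex (ν : Measure F) [IsProbabilityMeasure ν] :
    ∃ p : F, ∀ K : Set F, IsCompact K → Convex ℝ K →
      ν Kᶜ < 1 / ((Module.finrank ℝ F : ℝ≥0∞) + 1) → p ∈ K := by
  let 𝓚 : Set (Set F) :=
    {K | IsCompact K ∧ Convex ℝ K ∧ ν Kᶜ < 1 / ((Module.finrank ℝ F : ℝ≥0∞) + 1)}
  suffices h : (⋂₀ 𝓚).Nonempty from
    h.imp fun p hp K hK hK' hνK => Set.mem_sInter.1 hp K (Set.mem_ofPred.2 ⟨hK, hK', hνK⟩)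
  -- The complements of at most `finrank ℝ F + 1` members of `𝓚` are too small to cover `F`.
  refine Convex.helly_theorem_set_compact' (fun K hK => hK.2.1) (fun K hK => hK.1)
    fun I hI hcard => ?_
  rcases I.eq_empty_or_nonempty with rfl | hne
  · simp
  refine Set.nonempty_iff_ne_empty.2 fun hempty => lt_irrefl (1 : ℝ≥0∞) ?_
  calc 1 = ν (⋃ K ∈ I, Kᶜ) := by
        rw [← measure_univ (μ := ν), ← Set.compl_empty, ← hempty, Set.sInter_eq_biInter]
        simp
    _ ≤ ∑ K ∈ I, ν Kᶜ := measure_biUnion_finset_le I _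
    _ < ∑ K ∈ I, 1 / ((Module.finrank ℝ F : ℝ≥0∞) + 1) :=
        ENNReal.sum_lt_sum_of_nonempty hne fun K hK => (hI hK).2.2
    _ = I.card / (Module.finrank ℝ F + 1) := by rw [Finset.sum_const, nsmul_eq_mul, mul_one_div]
    _ ≤ 1 := ENNReal.div_le_of_le_mul (by rw [one_mul]; exact_mod_cast hcard)

variable [BorelSpace F]

theorem le_measure_of_forall_mem_of_isCompact_of_convex {ν : Measure F} [IsFiniteMeasure ν]
    {r : ℝ≥0∞} {p : F} (hp : ∀ K : Set F, IsCompact K → Convex ℝ K → ν Kᶜ < r → p ∈ K)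
    (f : F →ₗ[ℝ] ℝ) : r ≤ ν {y | f p ≤ f y} := by
  have hf : Continuous f := f.continuous_of_finiteDimensional
  let K (n : ℕ) : Set F := Metric.closedBall 0 n ∩ {y | f y ≤ f p - 1 / (n + 1)}
  have hK_compact (n : ℕ) : IsCompact (K n) :=
    (isCompact_closedBall 0 _).inter_right (isClosed_le hf continuous_const)
  have hK_convex (n : ℕ) : Convex ℝ (K n) :=
    (convex_closedBall 0 _).inter (convex_halfSpace_le f.isLinear _)
  have hK_mono : Monotone K := fun n m h => Set.inter_subset_inter
    (Metric.closedBall_subset_closedBall (by exact_mod_cast h)) <| Set.ofPred_subset_ofPred.2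
      fun y hy => hy.trans (sub_le_sub_left (Nat.one_div_le_one_div h) _)
  have hK_inter : ⋂ n, (K n)ᶜ = {y | f p ≤ f y} := by
    ext y
    simp only [K, Set.mem_iInter, Set.mem_compl_iff, Set.mem_inter_iff, mem_closedBall_zero_iff,
      Set.mem_ofPred_eq, not_and, not_le]
    refine ⟨fun h => ?_, fun h n _ => ?_⟩
    · have hev : ∀ᶠ n : ℕ in atTop, f p - 1 / (n + 1) ≤ f y :=
        (tendsto_natCast_atTop_atTop.eventually_ge_atTop ‖y‖).mono fun n hn => (h n hn).le
      refine le_of_tendsto (f := fun n : ℕ => f p - 1 / ((n : ℝ) + 1)) ?_ hev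
      simpa using tendsto_one_div_add_atTop_nhds_zero_nat.const_sub (f p)
    · linarith [Nat.one_div_pos_of_nat (α := ℝ) (n := n)]
  have hlim : Tendsto (fun n => ν (K n)ᶜ) atTop (𝓝 (ν {y | f p ≤ f y})) := by
    rw [← hK_inter]
    exact tendsto_measure_iInter_atTop
      (fun n => (hK_compact n).measurableSet.compl.nullMeasurableSet)
      (fun n m h => Set.compl_subset_compl.2 (hK_mono h)) ⟨0, measure_ne_top _ _⟩
  by_contra! hlt
  obtain ⟨n, hn⟩ := (hlim.eventually_lt_const hlt).exists
  have hpn : f p ≤ f p - 1 / (n + 1) := (hp (K n) (hK_compact n) (hK_convex n) hn).2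
  linarith [Nat.one_div_pos_of_nat (α := ℝ) (n := n)]

end Centerpoint

section ProjectedCenterpoint

variable {ι E : Type*} [Fintype ι] [NormedAddCommGroup E] [InnerProductSpace ℝ E]
  [MeasurableSpace E] [BorelSpace E]

theorem exists_forall_le_measure_dotProduct_le_inner (μ : Measure E) [IsProbabilityMeasure μ]
    {R : ℝ} (hR₀ : 0 ≤ R)
    (hR : μ (Metric.closedBall 0 R)ᶜ < 1 / ((Fintype.card ι : ℝ≥0∞) + 1)) (W : ι → E) :
    ∃ p : ι → ℝ, ‖p‖ ≤ R * ‖W‖ ∧ ∀ a : ι → ℝ,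
      1 / ((Fintype.card ι : ℝ≥0∞) + 1) ≤ μ {y | a ⬝ᵥ p ≤ ⟪y, ∑ i, a i • W i⟫_ℝ} := by
  let φ (y : E) (i : ι) : ℝ := ⟪y, W i⟫_ℝ
  have hφ : Continuous φ := by fun_prop
  have : IsProbabilityMeasure (μ.map φ) := Measure.isProbabilityMeasure_map hφ.aemeasurable
  obtain ⟨p, hp⟩ := exists_forall_mem_of_isCompact_of_convex (μ.map φ)
  rw [Module.finrank_fintype_fun_eq_card] at hp
  refine ⟨p, ?_, fun a => ?_⟩
  · rw [← mem_closedBall_zero_iff]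
    refine hp _ (isCompact_closedBall _ _) (convex_closedBall _ _) (lt_of_le_of_lt ?_ hR)
    rw [Measure.map_apply hφ.measurable Metric.isClosed_closedBall.measurableSet.compl,
      Set.preimage_compl]
    refine measure_mono (Set.compl_subset_compl.2 fun y hy => Set.mem_preimage.2 ?_)
    rw [mem_closedBall_zero_iff] at hy
    rw [mem_closedBall_zero_iff, pi_norm_le_iff_of_nonneg (by positivity)]
    exact fun i => (norm_inner_le_norm y (W i)).trans <|
      mul_le_mul hy (norm_le_pi_norm W i) (norm_nonneg _) hR₀
  · have h := le_measure_of_forall_mem_of_isCompact_of_convex hp (Fintype.linearCombination ℝ a)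
    have hmeas : MeasurableSet
        {z | Fintype.linearCombination ℝ a p ≤ Fintype.linearCombination ℝ a z} :=
      (isClosed_le continuous_const
        (LinearMap.continuous_of_finiteDimensional _)).measurableSet
    rw [Measure.map_apply hφ.measurable hmeas, Set.preimage_ofPred_eq] at h
    simpa [φ, Fintype.linearCombination_apply, dotProduct, inner_sum, real_inner_smul_right,
      mul_comm] using h

end ProjectedCenterpoint

section Semicontinuity

variable {X Y : Type*} [TopologicalSpace X] [TopologicalSpace Y] [MeasurableSpace Y]

lemma lowerSemicontinuous_measure_preimage_mk (μ : Measure Y) [μ.Regular] {O : Set (X × Y)}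
    (hO : IsOpen O) : LowerSemicontinuous fun x => μ (Prod.mk x ⁻¹' O) := by
  intro x r hr
  obtain ⟨K, hKO, hK, hrK⟩ := (hO.preimage (by fun_prop)).exists_lt_isCompact hr
  filter_upwards [hK.eventually_forall_of_forall_eventually (P := fun x y => (x, y) ∈ O)
    fun y hy => hO.mem_nhds (hKO hy)] with x' hx'
  exact hrK.trans_le (measure_mono hx')

lemma upperSemicontinuous_measure_preimage_mk [OpensMeasurableSpace Y] (μ : Measure Y)
    [μ.Regular] [IsFiniteMeasure μ] {C : Set (X × Y)} (hC : IsClosed C) :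
    UpperSemicontinuous fun x => μ (Prod.mk x ⁻¹' C) := by
  have hcompl (x : X) : μ (Prod.mk x ⁻¹' C) = μ Set.univ - μ (Prod.mk x ⁻¹' Cᶜ) := by
    rw [← measure_compl (hC.isOpen_compl.preimage (by fun_prop)).measurableSet
      (measure_ne_top _ _), Set.preimage_compl, compl_compl]
  simp only [hcompl]
  exact (ENNReal.continuous_sub_left (measure_ne_top _ _)).comp_lowerSemicontinuous_antitone
    (lowerSemicontinuous_measure_preimage_mk μ hC.isOpen_compl) fun _ _ h => tsub_le_tsub_left h _

end Semicontinuity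

section EquivariantSelection

variable {G X F : Type*} [Group G] [Finite G] [TopologicalSpace X] [NormalSpace X]
  [ParacompactSpace X] [MulAction G X] [ContinuousConstSMul G X]
  [AddCommGroup F] [Module ℝ F] [TopologicalSpace F] [IsTopologicalAddGroup F]
  [ContinuousSMul ℝ F] [DistribMulAction G F] [ContinuousConstSMul G F] [SMulCommClass G ℝ F]

theorem exists_continuous_equivariant_forall_mem {t : X → Set F} (ht : ∀ x, Convex ℝ (t x))
    (hloc : ∀ x, ∃ p, ∀ᶠ y in 𝓝 x, p ∈ t y)
    (hsmul : ∀ (g : G) ⦃x p⦄, p ∈ t x → g • p ∈ t (g • x)) :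
    ∃ c : X → F, Continuous c ∧ (∀ x, c x ∈ t x) ∧ ∀ (g : G) x, c (g • x) = g • c x := by
  have := Fintype.ofFinite G
  obtain ⟨c, hc⟩ := exists_continuous_forall_mem_convex_of_local_const ht hloc
  let avg (x : X) : F := ∑ g : G, (Fintype.card G : ℝ)⁻¹ • g⁻¹ • c (g • x)
  refine ⟨avg, by fun_prop, fun x => (ht x).sum_mem (fun _ _ => by positivity) (by simp)
    fun g _ => by simpa using hsmul g⁻¹ (hc (g • x)), fun h x => ?_⟩
  simp only [avg, Finset.smul_sum]
  exact Fintype.sum_equiv (Equiv.mulRight h) _ _ fun g => by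
    simp [smul_comm h, mul_smul]

end EquivariantSelection

section SignChange

variable {ι V : Type*}

lemma norm_units_smul [Fintype ι] [SeminormedAddCommGroup V] (g : ι → ℤˣ) (x : ι → V) :
    ‖g • x‖ = ‖x‖ := by
  have hnnnorm (i : ι) : ‖(g • x) i‖₊ = ‖x i‖₊ := NNReal.eq (norm_units_zsmul (g i) (x i))
  simp only [Pi.norm_def, hnnnorm]

lemma flipBlock_id_eq_smul [DecidableEq ι] [AddCommGroup V] (b : ι) (x : ι → V) :
    flipBlock id b x = Pi.mulSingle (M := fun _ => ℤˣ) b (-1) • x := by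
  ext i
  by_cases hi : i = b
  · subst hi
    simp [flipBlock]
  · simp [flipBlock, hi]

end SignChange

section NearCenters

variable {ι E : Type*} [Fintype ι] [NormedAddCommGroup E] [InnerProductSpace ℝ E]
  [MeasurableSpace E] {μ : Measure E} {R δ : ℝ} {α : ℝ≥0∞} {W : ι → E} {p : ι → ℝ}

/-- Points of depth almost `α` for the image of `μ` under `y ↦ (⟪y, W i⟫)ᵢ`, with a slack `δ` that
makes the depth condition open in `W`. -/
def nearCenters (μ : Measure E) (R δ : ℝ) (α : ℝ≥0∞) (W : ι → E) : Set (ι → ℝ) :=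
  {p | ‖p‖ < R * ‖W‖ + 1 ∧
    ∀ a ∈ Metric.closedBall 0 1, α < μ {y | a ⬝ᵥ p - δ < ⟪y, ∑ i, a i • W i⟫_ℝ}}

lemma convex_nearCenters : Convex ℝ (nearCenters μ R δ α W) := by
  have hdepth (a : ι → ℝ) :
      Convex ℝ {p : ι → ℝ | α < μ {y | a ⬝ᵥ p - δ < ⟪y, ∑ i, a i • W i⟫_ℝ}} := by
    have hlower : IsLowerSet {s : ℝ | α < μ {y | s - δ < ⟪y, ∑ i, a i • W i⟫_ℝ}} :=
      fun s t hts hs => (Set.mem_ofPred.1 hs).trans_le <| measure_mono <|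
        Set.ofPred_subset_ofPred.2 fun y hy => (sub_le_sub_right hts δ).trans_lt hy
    exact hlower.ordConnected.convex.is_linear_preimage
      (f := fun p => a ⬝ᵥ p) ⟨dotProduct_add a, fun s p => dotProduct_smul s a p⟩
  have hball : Convex ℝ {p : ι → ℝ | ‖p‖ < R * ‖W‖ + 1} := by
    simpa [Metric.ball] using convex_ball (0 : ι → ℝ) (R * ‖W‖ + 1)
  have hinter : nearCenters μ R δ α W = {p | ‖p‖ < R * ‖W‖ + 1} ∩
      ⋂ a ∈ Metric.closedBall 0 1, {p | α < μ {y | a ⬝ᵥ p - δ < ⟪y, ∑ i, a i • W i⟫_ℝ}} := by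
    ext
    simp [nearCenters]
  rw [hinter]
  exact hball.inter (convex_iInter₂ fun a _ => hdepth a)

lemma isOpen_setOf_mem_nearCenters [μ.Regular] :
    IsOpen {W : ι → E | p ∈ nearCenters μ R δ α W} := by
  have hO : IsOpen {z : ((ι → E) × (ι → ℝ)) × E |
      z.1.2 ⬝ᵥ p - δ < ⟪z.2, ∑ i, z.1.2 i • z.1.1 i⟫_ℝ} :=
    isOpen_lt (by fun_prop) (by fun_prop)
  refine isOpen_iff_eventually.2 fun W hW => ?_
  refine (ContinuousAt.eventually_lt (by fun_prop) (by fun_prop) hW.1).and <|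
    (isCompact_closedBall 0 1).eventually_forall_of_forall_eventually fun a ha =>
      lowerSemicontinuous_measure_preimage_mk μ hO (W, a) α (hW.2 a ha)

lemma smul_mem_nearCenters (g : ι → ℤˣ) (hp : p ∈ nearCenters μ R δ α W) :
    g • p ∈ nearCenters μ R δ α (g • W) := by
  refine ⟨by simpa only [norm_units_smul] using hp.1, fun a ha => ?_⟩
  have hdot : a ⬝ᵥ g • p = (g • a) ⬝ᵥ p := by
    simp [dotProduct, Units.smul_def, mul_left_comm, mul_assoc]
  have hsum : ∑ i, a i • (g • W) i = ∑ i, (g • a) i • W i :=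
    Finset.sum_congr rfl fun i _ => (smul_comm (a i) (g i) (W i)).trans (smul_assoc _ _ _).symm
  rw [hdot, hsum]
  exact hp.2 _ (by simpa only [mem_closedBall_zero_iff, norm_units_smul] using ha)

variable [BorelSpace E]

lemma nearCenters_nonempty [IsProbabilityMeasure μ] (hR₀ : 0 ≤ R)
    (hR : μ (Metric.closedBall 0 R)ᶜ < 1 / ((Fintype.card ι : ℝ≥0∞) + 1)) (hδ : 0 < δ)
    (hα : α < 1 / ((Fintype.card ι : ℝ≥0∞) + 1)) (W : ι → E) :
    (nearCenters μ R δ α W).Nonempty := by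
  obtain ⟨p, hpR, hp⟩ := exists_forall_le_measure_dotProduct_le_inner μ hR₀ hR W
  exact ⟨p, hpR.trans_lt (lt_add_one _), fun a _ => (hα.trans_le (hp a)).trans_le <| measure_mono <|
    Set.ofPred_subset_ofPred.2 fun y hy => (sub_lt_self _ hδ).trans_le hy⟩

theorem exists_continuous_forall_mem_nearCenters [DecidableEq ι] [FiniteDimensional ℝ E]
    [IsProbabilityMeasure μ] (hR₀ : 0 ≤ R)
    (hR : μ (Metric.closedBall 0 R)ᶜ < 1 / ((Fintype.card ι : ℝ≥0∞) + 1)) (hδ : 0 < δ)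
    (hα : α < 1 / ((Fintype.card ι : ℝ≥0∞) + 1)) :
    ∃ c : (ι → E) → ι → ℝ, Continuous c ∧ (∀ W, c W ∈ nearCenters μ R δ α W) ∧
      ∀ b W, c (flipBlock id b W) = flipBlock id b (c W) := by
  have : SMulCommClass (ι → ℤˣ) ℝ (ι → ℝ) := ⟨fun g s x => funext fun i => smul_comm (g i) s (x i)⟩
  obtain ⟨c, hc, hmem, hsmul⟩ := exists_continuous_equivariant_forall_mem (G := ι → ℤˣ)
    (t := nearCenters (ι := ι) μ R δ α) (fun _ => convex_nearCenters)
    (fun W => (nearCenters_nonempty hR₀ hR hδ hα W).imp fun p hp =>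
      isOpen_setOf_mem_nearCenters.mem_nhds hp)
    fun g _ _ => smul_mem_nearCenters g
  exact ⟨c, hc, hmem, fun b W => by simp only [flipBlock_id_eq_smul, hsmul]⟩

end NearCenters

section CommonCenter

variable {m : ℕ} {ι E : Type*} [NormedAddCommGroup E] [InnerProductSpace ℝ E]

lemma isClosed_setOf_orthonormal : IsClosed {W : ι → E | Orthonormal ℝ W} := by
  classical
  simp only [orthonormal_iff_ite, Set.ofPred_forall]
  exact isClosed_iInter fun i => isClosed_iInter fun j => isClosed_eq (by fun_prop) (by fun_prop)

variable [Fintype ι]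

lemma norm_le_one_of_orthonormal {W : ι → E} (hW : Orthonormal ℝ W) : ‖W‖ ≤ 1 :=
  (pi_norm_le_iff_of_nonneg zero_le_one).2 fun i => (hW.norm_eq_one i).le

variable [FiniteDimensional ℝ E] [MeasurableSpace E] [BorelSpace E]

lemma exists_forall_measure_compl_closedBall_lt {κ : Type*} [Finite κ] (μ : κ → Measure E)
    [∀ j, IsFiniteMeasure (μ j)] {r : ℝ≥0∞} (hr : 0 < r) :
    ∃ R : ℝ, 0 ≤ R ∧ ∀ j, μ j (Metric.closedBall 0 R)ᶜ < r := by
  have hlim (j : κ) : Tendsto (fun R : ℝ => μ j (Metric.closedBall 0 R)ᶜ) atTop (𝓝 0) := by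
    simpa using tendsto_measure_compl_closedBall_of_isTightMeasureSet
      (isTightMeasureSet_singleton (μ := μ j)) 0
  exact ((eventually_ge_atTop 0).and
    (eventually_all.2 fun j => (hlim j).eventually_lt_const hr)).exists

lemma isClosed_setOf_le_measure_halfspace (μ : Measure E) [IsFiniteMeasure μ] (a : ι → ℝ) :
    IsClosed {z : ((ι → E) × (ι → ℝ) × ℝ) × ℝ≥0∞ |
      z.2 ≤ μ {y | a ⬝ᵥ z.1.2.1 - z.1.2.2 ≤ ⟪y, ∑ i, a i • z.1.1 i⟫_ℝ}} := by
  have hC : IsClosed {q : ((ι → E) × (ι → ℝ) × ℝ) × E |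
      a ⬝ᵥ q.1.2.1 - q.1.2.2 ≤ ⟪q.2, ∑ i, a i • q.1.1 i⟫_ℝ} :=
    isClosed_le (by fun_prop) (by fun_prop)
  exact (upperSemicontinuous_measure_preimage_mk μ hC).IsClosed_hypograph

theorem exists_orthonormal_forall_mem_nearCenters [LinearOrder ι]
    (hE : Module.finrank ℝ E = m + Fintype.card ι) (μ : Fin (m + 1) → Measure E)
    [∀ j, IsProbabilityMeasure (μ j)] {R δ : ℝ} {α : ℝ≥0∞} (hR₀ : 0 ≤ R)
    (hR : ∀ j, μ j (Metric.closedBall 0 R)ᶜ < 1 / ((Fintype.card ι : ℝ≥0∞) + 1)) (hδ : 0 < δ)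
    (hα : α < 1 / ((Fintype.card ι : ℝ≥0∞) + 1)) :
    ∃ W : ι → E, Orthonormal ℝ W ∧ ∃ p, ∀ j, p ∈ nearCenters (μ j) R δ α W := by
  choose c hc hmem hflip using fun j => exists_continuous_forall_mem_nearCenters hR₀ (hR j) hδ hα
  obtain ⟨W, hW, hzero⟩ := exists_orthonormal_forall_eq_zero (γ := Fin m)
    (C := fun j W => c j.succ W - c 0 W) (by rwa [Fintype.card_fin])
    (fun j => (hc j.succ).sub (hc 0)) fun j b W => by
      simp only [hflip]
      ext i
      by_cases hi : i = b <;> simp [flipBlock, hi, neg_add_eq_sub]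
  have hcommon (j : Fin (m + 1)) : c j W = c 0 W :=
    Fin.cases rfl (fun j => sub_eq_zero.1 (hzero j)) j
  exact ⟨W, hW, c 0 W, fun j => hcommon j ▸ hmem j W⟩

theorem exists_orthonormal_forall_le_measure_of_norm_le_one [LinearOrder ι]
    (hE : Module.finrank ℝ E = m + Fintype.card ι) (μ : Fin (m + 1) → Measure E)
    [∀ j, IsProbabilityMeasure (μ j)] :
    ∃ W : ι → E, Orthonormal ℝ W ∧ ∃ p : ι → ℝ, ∀ j (a : ι → ℝ), ‖a‖ ≤ 1 →
      1 / ((Fintype.card ι : ℝ≥0∞) + 1) ≤ μ j {y | a ⬝ᵥ p ≤ ⟪y, ∑ i, a i • W i⟫_ℝ} := by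
  have hr : 0 < 1 / ((Fintype.card ι : ℝ≥0∞) + 1) := by simp
  obtain ⟨R, hR₀, hR⟩ := exists_forall_measure_compl_closedBall_lt μ hr
  obtain ⟨α, -, hα, hα_lim⟩ := exists_seq_strictMono_tendsto' hr
  choose W hW p hp using fun n : ℕ => exists_orthonormal_forall_mem_nearCenters hE μ hR₀ hR
    (Nat.one_div_pos_of_nat (n := n)) (hα n).2
  have hbounded (n : ℕ) :
      (W n, p n) ∈ Metric.closedBall (0 : ι → E) 1 ×ˢ Metric.closedBall (0 : ι → ℝ) (R + 1) := by
    have hWn : ‖W n‖ ≤ 1 := norm_le_one_of_orthonormal (hW n)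
    exact ⟨by simpa using hWn,
      by simpa using (hp n 0).1.le.trans (by nlinarith)⟩
  obtain ⟨⟨W', p'⟩, -, φ, hφ, hlim⟩ :=
    ((isCompact_closedBall _ _).prod (isCompact_closedBall _ _)).tendsto_subseq hbounded
  have hWlim : Tendsto (W ∘ φ) atTop (𝓝 W') := (continuous_fst.tendsto _).comp hlim
  have hplim : Tendsto (p ∘ φ) atTop (𝓝 p') := (continuous_snd.tendsto _).comp hlim
  refine ⟨W', isClosed_setOf_orthonormal.mem_of_tendsto hWlim (.of_forall fun n => hW (φ n)), p',
    fun j a ha => ?_⟩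
  have hδ_lim : Tendsto (fun n => 1 / ((φ n : ℝ) + 1)) atTop (𝓝 0) :=
    tendsto_one_div_add_atTop_nhds_zero_nat.comp hφ.tendsto_atTop
  have hmem := (isClosed_setOf_le_measure_halfspace (μ j) a).mem_of_tendsto
    ((hWlim.prodMk_nhds (hplim.prodMk_nhds hδ_lim)).prodMk_nhds (hα_lim.comp hφ.tendsto_atTop))
    (.of_forall fun n => Set.mem_ofPred.2 <| ((hp (φ n) j).2 a (by simpa using ha)).le.trans <|
      measure_mono <| Set.ofPred_subset_ofPred.2 fun y hy => hy.le)
  simpa using hmem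

theorem exists_orthonormal_forall_le_measure [LinearOrder ι]
    (hE : Module.finrank ℝ E = m + Fintype.card ι) (μ : Fin (m + 1) → Measure E)
    [∀ j, IsProbabilityMeasure (μ j)] :
    ∃ W : ι → E, Orthonormal ℝ W ∧ ∃ p : ι → ℝ, ∀ j (a : ι → ℝ),
      1 / ((Fintype.card ι : ℝ≥0∞) + 1) ≤ μ j {y | a ⬝ᵥ p ≤ ⟪y, ∑ i, a i • W i⟫_ℝ} := by
  obtain ⟨W, hW, p, hp⟩ := exists_orthonormal_forall_le_measure_of_norm_le_one hE μ
  refine ⟨W, hW, p, fun j a => ?_⟩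
  have hs : 0 < (‖a‖ + 1)⁻¹ := by positivity
  have hnorm : ‖(‖a‖ + 1)⁻¹ • a‖ ≤ 1 := by
    rw [norm_smul, Real.norm_of_nonneg hs.le, inv_mul_le_one₀ (by positivity)]
    exact (lt_add_one _).le
  simpa [← smul_smul, ← Finset.smul_sum, real_inner_smul_right, hs] using hp j _ hnorm

end CommonCenter

section Flat

variable {E : Type*} [NormedAddCommGroup E] [InnerProductSpace ℝ E]

lemma mem_orthogonal_direction_of_subset_halfspace {L : AffineSubspace ℝ E}
    (hL : (L : Set E).Nonempty) {u : E} {s : ℝ} (hu : (L : Set E) ⊆ {y | s ≤ ⟪y, u⟫_ℝ}) :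
    u ∈ L.directionᗮ := by
  obtain ⟨p, hp⟩ := hL
  rw [Submodule.mem_orthogonal]
  intro v hv
  by_contra hne
  have hmem := Set.mem_ofPred.1 <| hu <| AffineSubspace.vadd_mem_of_mem_direction
    (L.direction.smul_mem ((s - 1 - ⟪p, u⟫_ℝ) / ⟪v, u⟫_ℝ) hv) hp
  rw [vadd_eq_add, inner_add_left, real_inner_smul_left, div_mul_cancel₀ _ hne] at hmem
  linarith

variable {ι : Type*} [Fintype ι] {W : ι → E}

/-- The flat of all points whose coordinates with respect to the orthonormal family `W` are `p`. -/
noncomputable def flat (W : ι → E) (p : ι → ℝ) : AffineSubspace ℝ E :=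
  .mk' (∑ i, p i • W i) (Submodule.span ℝ (Set.range W))ᗮ

lemma flat_nonempty (W : ι → E) (p : ι → ℝ) : (flat W p : Set E).Nonempty :=
  ⟨_, AffineSubspace.self_mem_mk' _ _⟩

lemma finrank_direction_flat_add_card [FiniteDimensional ℝ E] (hW : LinearIndependent ℝ W)
    (p : ι → ℝ) : Module.finrank ℝ (flat W p).direction + Fintype.card ι = Module.finrank ℝ E := by
  rw [flat, AffineSubspace.direction_mk', ← finrank_span_eq_card hW, add_comm,
    Submodule.finrank_add_finrank_orthogonal]

lemma exists_eq_sum_smul_of_flat_subset_halfspace (hW : Orthonormal ℝ W) {p : ι → ℝ} {u : E} {s : ℝ}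
    (hu : (flat W p : Set E) ⊆ {y | s ≤ ⟪y, u⟫_ℝ}) :
    ∃ a : ι → ℝ, u = ∑ i, a i • W i ∧ s ≤ a ⬝ᵥ p := by
  have := FiniteDimensional.span_of_finite ℝ (Set.finite_range W)
  have huW := mem_orthogonal_direction_of_subset_halfspace (flat_nonempty W p) hu
  rw [flat, AffineSubspace.direction_mk', Submodule.orthogonal_orthogonal,
    Submodule.mem_span_range_iff_exists_fun] at huW
  obtain ⟨a, rfl⟩ := huW
  have hs : s ≤ ⟪∑ i, p i • W i, ∑ i, a i • W i⟫_ℝ := hu (AffineSubspace.self_mem_mk' _ _)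
  refine ⟨a, rfl, hs.trans_eq ?_⟩
  simp [hW.inner_sum, dotProduct, mul_comm]

end Flat

end CentralTransversal

theorem central_transversal_general {E : Type*} [NormedAddCommGroup E] [InnerProductSpace ℝ E]
    [FiniteDimensional ℝ E] [MeasurableSpace E] [BorelSpace E] {m : ℕ}
    (hm : m ≤ Module.finrank ℝ E) (μ : Fin (m + 1) → Measure E)
    (hprob : ∀ i, IsProbabilityMeasure (μ i)) :
    ∃ L : AffineSubspace ℝ E, (L : Set E).Nonempty ∧ Module.finrank ℝ L.direction = m ∧
      ∀ (u : E) (c : ℝ), (L : Set E) ⊆ {y | c ≤ ⟪y, u⟫_ℝ} →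
        ∀ i, 1 / (((Module.finrank ℝ E - m : ℕ) : ℝ≥0∞) + 1) ≤ μ i {y | c ≤ ⟪y, u⟫_ℝ} := by
  have hE : Module.finrank ℝ E = m + Fintype.card (Fin (Module.finrank ℝ E - m)) := by
    rw [Fintype.card_fin]
    omega
  obtain ⟨W, hW, p, hp⟩ := CentralTransversal.exists_orthonormal_forall_le_measure hE μ
  refine ⟨CentralTransversal.flat W p, CentralTransversal.flat_nonempty W p, ?_,
    fun u c hu i => ?_⟩
  · have := CentralTransversal.finrank_direction_flat_add_card hW.linearIndependent p
    omega
  · obtain ⟨a, rfl, hc⟩ :=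
      CentralTransversal.exists_eq_sum_smul_of_flat_subset_halfspace hW hu
    have hpi := hp i a
    rw [Fintype.card_fin] at hpi
    exact hpi.trans (measure_mono fun y hy => hc.trans hy)

/-- The central transversal theorem: given `m+1` absolutely continuous probability
measures on `ℝ^d` (`0 ≤ m ≤ d`), there is an affine `m`-flat `L` such that every
closed halfspace containing `L` has measure at least `1/(d-m+1)` for each of the
measures. -/
theorem central_transversal (d m : ℕ) (hm : m ≤ d)
    (μ : Fin (m + 1) → Measure (EuclideanSpace ℝ (Fin d)))
    (hprob : ∀ i, IsProbabilityMeasure (μ i))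
    (hac : ∀ i, μ i ≪ volume) :
    ∃ L : AffineSubspace ℝ (EuclideanSpace ℝ (Fin d)),
      (L : Set (EuclideanSpace ℝ (Fin d))).Nonempty ∧
      Module.finrank ℝ L.direction = m ∧
      ∀ (u : EuclideanSpace ℝ (Fin d)) (c : ℝ), ‖u‖ = 1 →
        (L : Set (EuclideanSpace ℝ (Fin d))) ⊆ {y | c ≤ ⟪y, u⟫_ℝ} →
        ∀ i, 1 / (((d - m : ℕ) : ℝ≥0∞) + 1) ≤ μ i {y | c ≤ ⟪y, u⟫_ℝ} := by
  have hm' : m ≤ Module.finrank ℝ (EuclideanSpace ℝ (Fin d)) := by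
    rwa [finrank_euclideanSpace_fin]
  obtain ⟨L, hL, hfin, h⟩ := central_transversal_general hm' μ hprob
  rw [finrank_euclideanSpace_fin] at h
  exact ⟨L, hL, hfin, fun u c _ hu => h u c hu⟩
end

section
/- (Colorful Tverberg theorem) Let r be a power of a prime and let t ≥ 2r−1. Let X ⊂ ℝ^d be a set of (d+1)·t points, colored with d+1 colors so that each color is used on exactly t points. Then there exist r pairwise disjoint subsets X_1, …, X_r ⊆ X such that each X_i has exactly d+1 points carrying all d+1 colors, and ⋂_{i=1}^r conv X_i ≠ ∅. -/
/-!
For `r ≥ 2` there is a prime `p` with `r < p ≤ 2r - 1`. Choose `p` points of every color and let `G`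
be a group of order `p`. It suffices to match the chosen points of every color with the elements of
`G` in such a way that the `p - 1` rainbow sets belonging to the elements `g ≠ 1` have convex hulls
with a common point.

In every color, put one point aside and place the remaining `p - 1` points injectively in `G`. These
placements are the facets of a join of chessboard complexes, which is a pseudomanifold on which `G`
acts freely by translation. By Sarkaria's tensor trick the points define an equivariant map from it
to the functions on `G` with values in the affine coordinates, modulo constants, and it suffices to
find a facet whose image spans a cone containing a prescribed vector `u`.

The signed number of such facets is the degree of the equivariant map at `u`. Moving one vertex
orbit at a time changes the degree by sums over orbits of `G`, on which all terms agree because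
translations preserve orientations when `p` is odd; hence all generic configurations have the same
degree modulo `p`. When all points of a color are the same basis vector the degree is a product of
copies of `(p - 1)!` up to sign, which is prime to `p`. Arbitrary configurations are limits of
generic ones.
-/

namespace ColorfulTverberg

open Finset Matrix Equiv

section OrthantCrossing

variable {L : Type*} {c e : L → ℝ} {l m : L}

/-- The line `t ↦ c - t • e` crosses the facet `x l = 0` of the positive orthant, in its relative
interior and at a positive time. If `e l = 0` the quotient is `0` and there is no crossing. -/
def CrossesFacet (c e : L → ℝ) (l : L) : Prop :=
  0 < c l / e l ∧ ∀ m ≠ l, 0 < c m - c l / e l * e m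

/-- The line `t ↦ c - t • e` lies in the open positive orthant at some positive time. -/
def MeetsOrthant (c e : L → ℝ) : Prop :=
  ∃ t > 0, ∀ m, 0 < c m - t * e m

theorem MeetsOrthant.neg_swap (h : MeetsOrthant c e) : MeetsOrthant (-e) (-c) := by
  obtain ⟨t, ht, hpos⟩ := h
  refine ⟨t⁻¹, inv_pos.mpr ht, fun m ↦ ?_⟩
  calc 0 < t⁻¹ * (c m - t * e m) := mul_pos (inv_pos.mpr ht) (hpos m)
    _ = (-e) m - t⁻¹ * (-c) m := by
      rw [mul_sub, inv_mul_cancel_left₀ ht.ne', Pi.neg_apply, Pi.neg_apply]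
      ring

theorem CrossesFacet.neg_swap (h : CrossesFacet c e l) : CrossesFacet (-e) (-c) l := by
  have htime : (-e) l / (-c) l = (c l / e l)⁻¹ := by simp [neg_div_neg_eq]
  refine ⟨htime ▸ inv_pos.mpr h.1, fun m hm ↦ ?_⟩
  calc 0 < (c l / e l)⁻¹ * (c m - c l / e l * e m) := mul_pos (inv_pos.mpr h.1) (h.2 m hm)
    _ = (-e) m - (-e) l / (-c) l * (-c) m := by
      rw [mul_sub, inv_mul_cancel_left₀ h.1.ne', htime, Pi.neg_apply, Pi.neg_apply]
      ring

theorem meetsOrthant_neg_swap : MeetsOrthant (-e) (-c) ↔ MeetsOrthant c e :=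
  ⟨fun h ↦ by simpa only [neg_neg] using h.neg_swap, MeetsOrthant.neg_swap⟩

theorem crossesFacet_neg_swap : CrossesFacet (-e) (-c) l ↔ CrossesFacet c e l :=
  ⟨fun h ↦ by simpa only [neg_neg] using h.neg_swap, CrossesFacet.neg_swap⟩

theorem CrossesFacet.neg_iff (h : CrossesFacet c e l) : c l < 0 ↔ e l < 0 := by
  rcases div_pos_iff.mp h.1 with ⟨hc, he⟩ | ⟨hc, he⟩
  · exact iff_of_false hc.not_gt he.not_gt
  · exact iff_of_true hc he

theorem neg_and_crossesFacet_iff :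
    e l < 0 ∧ CrossesFacet c e l ↔ 0 < (-c) l ∧ CrossesFacet (-e) (-c) l := by
  rw [crossesFacet_neg_swap, Pi.neg_apply, neg_pos]
  exact and_congr_left fun h ↦ h.neg_iff.symm

theorem CrossesFacet.time_lt (h : CrossesFacet c e l) (hm : 0 < e m) (hne : m ≠ l) :
    c l / e l < c m / e m := by
  rw [lt_div_iff₀ hm]
  linarith [h.2 m hne]

theorem eq_of_pos_of_crossesFacet (hl : 0 < e l ∧ CrossesFacet c e l)
    (hm : 0 < e m ∧ CrossesFacet c e m) : l = m := by
  by_contra hne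
  exact lt_asymm (hl.2.time_lt hm.1 (Ne.symm hne)) (hm.2.time_lt hl.1 hne)

theorem eq_of_neg_of_crossesFacet (hl : e l < 0 ∧ CrossesFacet c e l)
    (hm : e m < 0 ∧ CrossesFacet c e m) : l = m :=
  eq_of_pos_of_crossesFacet (neg_and_crossesFacet_iff.mp hl) (neg_and_crossesFacet_iff.mp hm)

theorem sub_mul_ne_zero_neg_swap (hc : ∀ l, c l ≠ 0) (he : ∀ l, e l ≠ 0)
    (hce : ∀ l m, l ≠ m → c m - c l / e l * e m ≠ 0) (l m : L) (hlm : l ≠ m) :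
    (-e) m - (-e) l / (-c) l * (-c) m ≠ 0 := by
  have h := hce l m hlm
  have hcl := hc l
  have hel := he l
  contrapose! h
  simp only [Pi.neg_apply, neg_div_neg_eq] at h
  field_simp at h ⊢
  linarith

variable [Finite L]

theorem CrossesFacet.meetsOrthant (hl : 0 < e l) (h : CrossesFacet c e l) : MeetsOrthant c e := by
  have hnear : ∀ m, ∀ᶠ t in nhdsWithin (c l / e l) (Set.Iio (c l / e l)), 0 < c m - t * e m := by
    intro m
    by_cases hm : m = l
    · filter_upwards [self_mem_nhdsWithin] with t ht
      rw [hm, sub_pos]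
      exact (lt_div_iff₀ hl).mp ht
    · have hcont : Continuous fun t : ℝ ↦ c m - t * e m := by fun_prop
      exact nhdsWithin_le_nhds (hcont.continuousAt.eventually (lt_mem_nhds (h.2 m hm)))
  have hpos : ∀ᶠ t in nhdsWithin (c l / e l) (Set.Iio (c l / e l)), 0 < t :=
    nhdsWithin_le_nhds (lt_mem_nhds h.1)
  exact (hpos.and (Filter.eventually_all.mpr hnear)).exists

theorem exists_pos_crossesFacet_iff (hce : ∀ l m, l ≠ m → c m - c l / e l * e m ≠ 0) :
    (∃ l, 0 < e l ∧ CrossesFacet c e l) ↔ MeetsOrthant c e ∧ ∃ l, 0 < e l := by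
  refine ⟨fun ⟨l, hl, h⟩ ↦ ⟨h.meetsOrthant hl, l, hl⟩, fun ⟨⟨t, ht, hpos⟩, hex⟩ ↦ ?_⟩
  -- The first facet at which the line leaves the orthant.
  obtain ⟨l, hl, hmin⟩ :=
    Set.exists_min_image {l | 0 < e l} (fun l ↦ c l / e l) (Set.toFinite _) hex
  have htl : t < c l / e l := (lt_div_iff₀ hl).mpr (by linarith [hpos l])
  refine ⟨l, hl, ht.trans htl, fun m hm ↦ ?_⟩
  rcases lt_or_ge 0 (e m) with hem | hem
  · have hle : c l / e l * e m ≤ c m := (le_div_iff₀ hem).mp (hmin m hem)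
    exact lt_of_le_of_ne (sub_nonneg.mpr hle) (hce l m hm.symm).symm
  · linarith [hpos m, mul_le_mul_of_nonpos_right htl.le hem]

theorem exists_neg_crossesFacet_iff (hc : ∀ l, c l ≠ 0) (he : ∀ l, e l ≠ 0)
    (hce : ∀ l m, l ≠ m → c m - c l / e l * e m ≠ 0) :
    (∃ l, e l < 0 ∧ CrossesFacet c e l) ↔ MeetsOrthant c e ∧ ∃ l, c l < 0 := by
  simp only [neg_and_crossesFacet_iff]
  rw [exists_pos_crossesFacet_iff (sub_mul_ne_zero_neg_swap hc he hce), meetsOrthant_neg_swap]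
  simp only [Pi.neg_apply, neg_pos]

theorem meetsOrthant_of_forall_pos (hc : ∀ l, 0 < c l) : MeetsOrthant c e := by
  have hnear : ∀ m, ∀ᶠ t in nhdsWithin (0 : ℝ) (Set.Ioi 0), 0 < c m - t * e m := fun m ↦ by
    have hcont : Continuous fun t : ℝ ↦ c m - t * e m := by fun_prop
    exact nhdsWithin_le_nhds (hcont.continuousAt.eventually (lt_mem_nhds (by simpa using hc m)))
  have hpos : ∀ᶠ t in nhdsWithin (0 : ℝ) (Set.Ioi 0), 0 < t := self_mem_nhdsWithin
  exact (hpos.and (Filter.eventually_all.mpr hnear)).exists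

theorem meetsOrthant_of_forall_neg (he : ∀ l, e l < 0) : MeetsOrthant c e :=
  meetsOrthant_neg_swap.mp (meetsOrthant_of_forall_pos fun l ↦ neg_pos.mpr (he l))

end OrthantCrossing

section CrossingCount

variable {L : Type*} [Fintype L]

theorem sum_ite_of_subsingleton {P : L → Prop} [DecidablePred P] [Decidable (∃ l, P l)]
    (h : ∀ l m, P l → P m → l = m) :
    ∑ l, (if P l then 1 else 0 : ℤ) = if ∃ l, P l then 1 else 0 := by
  split_ifs with hex
  · obtain ⟨l, hl⟩ := hex
    rw [Fintype.sum_eq_single l fun m hm ↦ if_neg fun hPm ↦ hm (h m l hPm hl), if_pos hl]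
  · exact Finset.sum_eq_zero fun l _ ↦ if_neg fun hl ↦ hex ⟨l, hl⟩

open scoped Classical in
theorem sum_sign_crossesFacet {c e : L → ℝ} (hc : ∀ l, c l ≠ 0) (he : ∀ l, e l ≠ 0)
    (hce : ∀ l m, l ≠ m → c m - c l / e l * e m ≠ 0) :
    ∑ l, (SignType.sign (e l) : ℤ) * (if CrossesFacet c e l then 1 else 0) =
      (if ∀ l, 0 < c l then 1 else 0) - (if ∀ l, e l < 0 then 1 else 0) := by
  have hterm : ∀ l, (SignType.sign (e l) : ℤ) * (if CrossesFacet c e l then 1 else 0) =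
      (if 0 < e l ∧ CrossesFacet c e l then 1 else 0) -
        (if e l < 0 ∧ CrossesFacet c e l then 1 else 0) := by
    intro l
    rcases (he l).lt_or_gt with h | h
    · simp [h, h.not_gt, apply_ite]
    · simp [h, h.not_gt]
  have hc_iff : (∃ l, c l < 0) ↔ ¬ ∀ l, 0 < c l := by
    simp only [not_forall, not_lt]
    exact exists_congr fun l ↦ (hc l).le_iff_lt.symm
  have he_iff : (∃ l, 0 < e l) ↔ ¬ ∀ l, e l < 0 := by
    simp only [not_forall, not_lt]
    exact exists_congr fun l ↦ (he l).symm.le_iff_lt.symm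
  have hc_meets : (∀ l, 0 < c l) → MeetsOrthant c e := meetsOrthant_of_forall_pos
  have he_meets : (∀ l, e l < 0) → MeetsOrthant c e := meetsOrthant_of_forall_neg
  rw [Finset.sum_congr rfl fun l _ ↦ hterm l, Finset.sum_sub_distrib,
    sum_ite_of_subsingleton (P := fun l ↦ 0 < e l ∧ CrossesFacet c e l)
      fun _ _ ↦ eq_of_pos_of_crossesFacet,
    sum_ite_of_subsingleton (P := fun l ↦ e l < 0 ∧ CrossesFacet c e l)
      fun _ _ ↦ eq_of_neg_of_crossesFacet,
    if_congr (exists_pos_crossesFacet_iff hce) rfl rfl,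
    if_congr (exists_neg_crossesFacet_iff hc he hce) rfl rfl]
  simp only [hc_iff, he_iff]
  split_ifs <;> tauto

end CrossingCount

section SignedCone

variable {L : Type*} [Fintype L] [DecidableEq L]

theorem det_updateRow_vecMul {R : Type*} [CommRing R] (A : Matrix L L R) (c : L → R) (l : L) :
    (A.updateRow l (c ᵥ* A)).det = c l * A.det := by
  rw [vecMul_eq_sum, det_updateRow_sum, smul_eq_mul]

theorem update_vecMul_updateRow {R : Type*} [CommRing R] (A : Matrix L L R) (b v : L → R) (l : L)
    (s : R) (hb : b l = 0) :
    Function.update b l s ᵥ* A.updateRow l v = s • v + b ᵥ* A := by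
  rw [vecMul_eq_sum, vecMul_eq_sum, ← Finset.add_sum_erase _ _ (mem_univ l),
    ← Finset.add_sum_erase univ (fun i ↦ b i • A i) (mem_univ l), hb, zero_smul, zero_add,
    Function.update_self, updateRow_self]
  congr 1
  refine Finset.sum_congr rfl fun m hm ↦ ?_
  have hml := ne_of_mem_erase hm
  rw [Function.update_of_ne hml, updateRow_ne hml]

theorem update_vecMul_updateRow_vecMul {F : Type*} [Field F] (A : Matrix L L F) (c : L → F)
    {e : L → F} {l : L} (hel : e l ≠ 0) :
    Function.update (c - (c l / e l) • e) l (c l / e l) ᵥ* A.updateRow l (e ᵥ* A) = c ᵥ* A := by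
  rw [update_vecMul_updateRow _ _ _ _ _ (by simp [hel]), sub_vecMul, smul_vecMul]
  exact add_sub_cancel _ _

open scoped Classical in
/-- The orientation of the open cone spanned by the rows of `A` if `u` lies in it, and `0`
otherwise: the local contribution of a simplicial cone to a degree at `u`. -/
noncomputable def signedCone (u : L → ℝ) (A : Matrix L L ℝ) : ℤ :=
  if ∃ c : L → ℝ, (∀ l, 0 < c l) ∧ c ᵥ* A = u then (SignType.sign A.det : ℤ) else 0

variable {A : Matrix L L ℝ} {c e u v : L → ℝ}

theorem vecMul_injective_of_det_ne_zero (hA : A.det ≠ 0) : Function.Injective (· ᵥ* A) :=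
  vecMul_injective_iff_isUnit.mpr ((isUnit_iff_isUnit_det A).mpr hA.isUnit)

theorem vecMul_surjective_of_det_ne_zero (hA : A.det ≠ 0) : Function.Surjective (· ᵥ* A) :=
  vecMul_surjective_iff_isUnit.mpr ((isUnit_iff_isUnit_det A).mpr hA.isUnit)

open scoped Classical in
theorem signedCone_vecMul (hA : A.det ≠ 0) (c : L → ℝ) :
    signedCone (c ᵥ* A) A = (SignType.sign A.det : ℤ) * if ∀ l, 0 < c l then 1 else 0 := by
  have hiff : (∃ b : L → ℝ, (∀ l, 0 < b l) ∧ b ᵥ* A = c ᵥ* A) ↔ ∀ l, 0 < c l :=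
    ⟨fun ⟨_, hb, h⟩ ↦ vecMul_injective_of_det_ne_zero hA h ▸ hb, fun h ↦ ⟨c, h, rfl⟩⟩
  rw [signedCone, if_congr hiff rfl rfl, mul_ite, mul_one, mul_zero]

open scoped Classical in
theorem signedCone_updateRow (l : L) (hA : (A.updateRow l (e ᵥ* A)).det ≠ 0) :
    signedCone (c ᵥ* A) (A.updateRow l (e ᵥ* A)) =
      (SignType.sign A.det : ℤ) *
        ((SignType.sign (e l) : ℤ) * if CrossesFacet c e l then 1 else 0) := by
  have hel : e l ≠ 0 := left_ne_zero_of_mul (det_updateRow_vecMul A e l ▸ hA)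
  have hpos : (∀ m, 0 < Function.update (c - (c l / e l) • e) l (c l / e l) m) ↔
      CrossesFacet c e l := by
    rw [Function.forall_update_iff (p := fun _ x ↦ 0 < x)]
    rfl
  rw [← update_vecMul_updateRow_vecMul A c hel, signedCone_vecMul hA, if_congr hpos rfl rfl,
    det_updateRow_vecMul, sign_mul, SignType.coe_mul]
  ring

/-- As `t` runs over the positive reals, `u - t • v` leaves or enters the cone of `A` exactly where
`u` lies in a cone with one row replaced by `v`; it lies in the cone for small `t` iff `u` does, and
for large `t` iff `-v` does. -/
theorem sum_signedCone_updateRow (hA : A.det ≠ 0) (hu : ∀ l, (A.updateRow l u).det ≠ 0)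
    (hv : ∀ l, (A.updateRow l v).det ≠ 0)
    (huv : ∀ l m, l ≠ m → ((A.updateRow l v).updateRow m u).det ≠ 0) :
    ∑ l, signedCone u (A.updateRow l v) = signedCone u A - signedCone (-v) A := by
  classical
  obtain ⟨c, rfl⟩ := vecMul_surjective_of_det_ne_zero hA u
  obtain ⟨e, rfl⟩ := vecMul_surjective_of_det_ne_zero hA v
  have hc : ∀ l, c l ≠ 0 := fun l ↦ left_ne_zero_of_mul (det_updateRow_vecMul A c l ▸ hu l)
  have he : ∀ l, e l ≠ 0 := fun l ↦ left_ne_zero_of_mul (det_updateRow_vecMul A e l ▸ hv l)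
  have hce : ∀ l m, l ≠ m → c m - c l / e l * e m ≠ 0 := by
    intro l m hlm
    have hdet := huv l m hlm
    simp only [← update_vecMul_updateRow_vecMul A c (he l)] at hdet
    rw [det_updateRow_vecMul, Function.update_of_ne hlm.symm] at hdet
    exact left_ne_zero_of_mul hdet
  simp only [signedCone_updateRow _ (hv _), ← Finset.mul_sum, sum_sign_crossesFacet hc he hce]
  rw [← neg_vecMul, signedCone_vecMul hA, signedCone_vecMul hA, mul_sub]
  simp only [Pi.neg_apply, neg_pos]

theorem signedCone_mul {T : Matrix L L ℝ} (hT : 0 < T.det) (u : L → ℝ) (A : Matrix L L ℝ) :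
    signedCone (u ᵥ* T) (A * T) = signedCone u A := by
  classical
  have hiff : (∃ c : L → ℝ, (∀ l, 0 < c l) ∧ c ᵥ* (A * T) = u ᵥ* T) ↔
      ∃ c : L → ℝ, (∀ l, 0 < c l) ∧ c ᵥ* A = u :=
    exists_congr fun c ↦ and_congr_right fun _ ↦ by
      rw [← vecMul_vecMul]
      exact (vecMul_injective_of_det_ne_zero hT.ne').eq_iff
  rw [signedCone, signedCone, if_congr hiff rfl rfl, det_mul, sign_mul, sign_pos hT, mul_one]

theorem sign_intUnits_cast (s : ℤˣ) : (SignType.sign ((s : ℤ) : ℝ) : ℤ) = s := by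
  rcases Int.units_eq_one_or s with rfl | rfl <;> simp

theorem signedCone_submatrix (u : L → ℝ) (A : Matrix L L ℝ) (π : Perm L) :
    signedCone u (A.submatrix π id) = (Perm.sign π : ℤ) * signedCone u A := by
  classical
  have hsub : ∀ c : L → ℝ, c ᵥ* A.submatrix π id = (c ∘ π.symm) ᵥ* A := fun c ↦
    submatrix_vecMul_equiv A c π id
  have hiff : (∃ c : L → ℝ, (∀ l, 0 < c l) ∧ c ᵥ* A.submatrix π id = u) ↔
      ∃ c : L → ℝ, (∀ l, 0 < c l) ∧ c ᵥ* A = u := by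
    simp only [hsub]
    exact ⟨fun ⟨c, hc, h⟩ ↦ ⟨c ∘ π.symm, fun l ↦ hc _, h⟩,
      fun ⟨c, hc, h⟩ ↦ ⟨c ∘ π, fun l ↦ hc _, by rwa [Function.comp_assoc, self_comp_symm]⟩⟩
  rw [signedCone, signedCone, if_congr hiff rfl rfl, det_permute, sign_mul, SignType.coe_mul,
    sign_intUnits_cast, mul_ite, mul_zero]

end SignedCone

section OddOrder

variable {G : Type*} [Group G]

theorem exists_mul_self_eq_of_odd_card (hG : Odd (Nat.card G)) (g : G) : ∃ h, h * h = g := by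
  obtain ⟨h, hh⟩ := (Nat.coprime_two_right.mpr hG).pow_left_bijective.surjective g
  exact ⟨h, (pow_two h).symm.trans hh⟩

theorem sign_mulRight_of_odd_card [Fintype G] [DecidableEq G] (hG : Odd (Nat.card G)) (g : G) :
    Perm.sign (Equiv.mulRight g) = 1 := by
  obtain ⟨h, rfl⟩ := exists_mul_self_eq_of_odd_card hG g
  rw [Equiv.mulRight_mul, map_mul, Int.units_mul_self]

theorem det_map_pos_of_odd_card {L : Type*} [Fintype L] [DecidableEq L] (hG : Odd (Nat.card G))
    (ρ : G →* Matrix L L ℝ) (g : G) : 0 < (ρ g).det := by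
  obtain ⟨h, rfl⟩ := exists_mul_self_eq_of_odd_card hG g
  rw [map_mul, det_mul]
  exact mul_self_pos.mpr ((isUnit_iff_isUnit_det _).mp ((Group.isUnit h).map ρ)).ne_zero

end OddOrder

section Degree

variable {J G : Type*} [Fintype J] [Fintype G] [DecidableEq G]

/-- The sign of the facet `σ` in the fundamental cycle of the join, over the colors, of the
pseudomanifolds formed by the injections of `G \ {1}` into `G`. -/
def orientation : (J → Perm G) →* ℤˣ where
  toFun σ := ∏ j, Perm.sign (σ j)
  map_one' := by simp only [Pi.one_apply, Perm.sign_one, prod_const_one]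
  map_mul' σ τ := by simp only [Pi.mul_apply, Perm.sign_mul, prod_mul_distrib]

theorem orientation_mulSingle [DecidableEq J] (j : J) (π : Perm G) :
    orientation (Pi.mulSingle j π) = Perm.sign π := by
  change ∏ i, Perm.sign ((Pi.mulSingle j π : J → Perm G) i) = _
  rw [Fintype.prod_eq_single j fun i hi ↦ by rw [Pi.mulSingle_eq_of_ne hi, Perm.sign_one],
    Pi.mulSingle_eq_same]

variable [Group G]

/-- Right translation by `g`, simultaneously in every color. -/
def rightTranslation (J : Type*) (g : G) : J → Perm G := fun _ ↦ Equiv.mulRight g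

theorem orientation_rightTranslation (hG : Odd (Nat.card G)) (g : G) :
    orientation (rightTranslation J g) = 1 :=
  Finset.prod_eq_one fun _ _ ↦ sign_mulRight_of_odd_card hG g

variable [DecidableEq J]

theorem card_dvd_sum_of_rightTranslation_invariant (j : J) {φ : (J → Perm G) → ℤ}
    (hφ : ∀ g σ, φ (rightTranslation J g * σ) = φ σ) : (Fintype.card G : ℤ) ∣ ∑ σ, φ σ := by
  have hfiber : ∀ g, ∑ σ with σ j 1 = g, φ σ = ∑ σ with σ j 1 = 1, φ σ := fun g ↦ by
    refine (Finset.sum_equiv (Equiv.mulLeft (rightTranslation J g)) (fun σ ↦ ?_)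
      fun σ _ ↦ (hφ g σ).symm).symm
    simp [rightTranslation]
  rw [← Finset.sum_fiberwise univ (fun σ ↦ σ j 1) φ, Finset.sum_congr rfl fun g _ ↦ hfiber g,
    Finset.sum_const, card_univ, nsmul_eq_mul]
  exact dvd_mul_right _ _

/-- A color together with a nontrivial group element. These pairs index both the coordinates of the
representation and the vertices of a facet `σ : J → Perm G`, whose vertices `σ j 1` are left out. -/
abbrev Vertex (J G : Type*) [Group G] := J × {g : G // g ≠ 1}

variable (ρ : G →* Matrix (Vertex J G) (Vertex J G) ℝ) {f : Vertex J G → Vertex J G → ℝ}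

/-- The images of the vertices of the facet `σ` under the `G`-equivariant map that sends the vertex
`(j, g)`, as the `l`-th vertex with `l.1 = j`, to `f l` translated by `g`. -/
def facet (f : Vertex J G → Vertex J G → ℝ) (σ : J → Perm G) :
    Matrix (Vertex J G) (Vertex J G) ℝ :=
  Matrix.of fun l ↦ f l ᵥ* ρ (σ l.1 l.2)

theorem facet_apply (σ : J → Perm G) (l : Vertex J G) :
    facet ρ f σ l = f l ᵥ* ρ (σ l.1 l.2) := rfl

theorem facet_rightTranslation_mul (g : G) (σ : J → Perm G) :
    facet ρ f (rightTranslation J g * σ) = facet ρ f σ * ρ g := by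
  refine funext fun l ↦ ?_
  change f l ᵥ* ρ (σ l.1 l.2 * g) = f l ᵥ* ρ (σ l.1 l.2) ᵥ* ρ g
  rw [map_mul, vecMul_vecMul]

theorem facet_update (l : Vertex J G) (a : Vertex J G → ℝ) (σ : J → Perm G) :
    facet ρ (Function.update f l a) σ = (facet ρ f σ).updateRow l (a ᵥ* ρ (σ l.1 l.2)) := by
  refine funext fun m ↦ ?_
  rcases eq_or_ne m l with rfl | hm
  · rw [updateRow_self, facet_apply, Function.update_self]
  · rw [updateRow_ne hm, facet_apply, facet_apply, Function.update_of_ne hm]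

/-- The algebraic number of facets whose image under the equivariant map spans a cone around `u`. -/
noncomputable def degree (u : Vertex J G → ℝ) (f : Vertex J G → Vertex J G → ℝ) : ℤ :=
  ∑ σ : J → Perm G, (orientation σ : ℤ) * signedCone u (facet ρ f σ)

theorem card_dvd_sum_signedCone (hG : Odd (Nat.card G)) (j : J)
    (w : (J → Perm G) → Vertex J G → ℝ)
    (hw : ∀ g σ, w (rightTranslation J g * σ) = w σ ᵥ* ρ g) :
    (Fintype.card G : ℤ) ∣
      ∑ σ, (orientation σ : ℤ) * signedCone (w σ) (facet ρ f σ) :=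
  card_dvd_sum_of_rightTranslation_invariant j fun g σ ↦ by
    rw [map_mul, orientation_rightTranslation hG, one_mul, hw, facet_rightTranslation_mul,
      signedCone_mul (det_map_pos_of_odd_card hG ρ g)]

/-- The facets `σ` and `σ * swap l 1` share all vertices but the `l`-th and have opposite
orientations. -/
theorem sum_signedCone_updateRow_eq_zero {l l₀ : Vertex J G} (hl : l ≠ l₀) (u a : Vertex J G → ℝ) :
    ∑ σ, (orientation σ : ℤ) *
      signedCone u ((facet ρ f σ).updateRow l (a ᵥ* ρ (σ l₀.1 l₀.2))) = 0 := by
  set τ : J → Perm G := Pi.mulSingle l.1 (swap l.2.1 1)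
  have hτ : ∀ m ≠ l, τ m.1 m.2 = m.2 := by
    rintro ⟨j, k⟩ hm
    rcases eq_or_ne j l.1 with rfl | hj
    · have hk : (k : G) ≠ l.2 := fun h ↦ hm (Prod.ext rfl (Subtype.ext h))
      simp only [τ, Pi.mulSingle_eq_same, swap_apply_of_ne_of_ne hk k.2]
    · simp only [τ, Pi.mulSingle_eq_of_ne hj, Perm.one_apply]
  have hrows : ∀ σ : J → Perm G,
      (facet ρ f (σ * τ)).updateRow l (a ᵥ* ρ ((σ * τ) l₀.1 l₀.2)) =
        (facet ρ f σ).updateRow l (a ᵥ* ρ (σ l₀.1 l₀.2)) := by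
    intro σ
    refine funext fun m ↦ ?_
    rcases eq_or_ne m l with rfl | hm
    · simp only [updateRow_self, Pi.mul_apply, Perm.mul_apply, hτ _ hl.symm]
    · simp only [updateRow_ne hm, facet_apply, Pi.mul_apply, Perm.mul_apply, hτ _ hm]
  have hsign : orientation τ = -1 := by rw [orientation_mulSingle, Perm.sign_swap l.2.2]
  refine self_eq_neg.mp ?_
  rw [← Finset.sum_neg_distrib]
  refine Fintype.sum_equiv (Equiv.mulRight τ) _ _ fun σ ↦ ?_
  rw [Equiv.coe_mulRight, hrows, map_mul, hsign]
  simp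

theorem card_dvd_degree_update_sub_degree (hG : Odd (Nat.card G)) {u a : Vertex J G → ℝ}
    {l₀ : Vertex J G} (hf : ∀ σ, (facet ρ f σ).det ≠ 0)
    (hu : ∀ σ l, ((facet ρ f σ).updateRow l u).det ≠ 0)
    (ha : ∀ σ l, ((facet ρ f σ).updateRow l (a ᵥ* ρ (σ l₀.1 l₀.2))).det ≠ 0)
    (hua : ∀ σ l m, l ≠ m →
      (((facet ρ f σ).updateRow l (a ᵥ* ρ (σ l₀.1 l₀.2))).updateRow m u).det ≠ 0) :
    (Fintype.card G : ℤ) ∣ degree ρ u (Function.update f l₀ a) - degree ρ u f := by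
  set v : (J → Perm G) → Vertex J G → ℝ := fun σ ↦ a ᵥ* ρ (σ l₀.1 l₀.2)
  have hsum : ∑ σ, (orientation σ : ℤ) * ∑ l, signedCone u ((facet ρ f σ).updateRow l (v σ)) =
      degree ρ u (Function.update f l₀ a) := by
    simp only [Finset.mul_sum]
    rw [Finset.sum_comm, Fintype.sum_eq_single l₀ fun l hl ↦
      sum_signedCone_updateRow_eq_zero ρ hl u a]
    simp only [degree, facet_update]
  have hcycle : degree ρ u (Function.update f l₀ a) - degree ρ u f =
      -∑ σ, (orientation σ : ℤ) * signedCone (-v σ) (facet ρ f σ) := by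
    rw [← hsum, degree, ← Finset.sum_sub_distrib, ← Finset.sum_neg_distrib]
    refine Finset.sum_congr rfl fun σ _ ↦ ?_
    rw [sum_signedCone_updateRow (hf σ) (hu σ) (ha σ) (hua σ)]
    ring
  rw [hcycle, dvd_neg]
  refine card_dvd_sum_signedCone ρ hG l₀.1 (fun σ ↦ -v σ) fun g σ ↦ ?_
  change -(a ᵥ* ρ (σ l₀.1 l₀.2 * g)) = -(a ᵥ* ρ (σ l₀.1 l₀.2)) ᵥ* ρ g
  rw [map_mul, neg_vecMul, vecMul_vecMul]

end Degree

section AnalyticGenericity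

variable {E : Type*} [NormedAddCommGroup E] [NormedSpace ℝ E]

theorem dense_ne_zero_of_analyticOnNhd {φ : E → ℝ} (hφ : AnalyticOnNhd ℝ φ Set.univ) {e₀ : E}
    (he₀ : φ e₀ ≠ 0) : Dense {e | φ e ≠ 0} := by
  refine fun e ↦ by_contra fun he ↦ he₀ ?_
  have hnhds : ∀ᶠ y in nhds e, φ y = 0 := by
    rw [mem_closure_iff_frequently, Filter.not_frequently] at he
    exact he.mono fun y hy ↦ not_not.mp hy
  exact hφ.eqOn_zero_of_preconnected_of_eventuallyEq_zero isPreconnected_univ (Set.mem_univ e)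
    hnhds (Set.mem_univ e₀)

theorem dense_forall_ne_zero_of_analyticOnNhd [CompleteSpace E] {ι : Type*} [Finite ι]
    {φ : ι → E → ℝ} (hφ : ∀ i, AnalyticOnNhd ℝ (φ i) Set.univ) (hne : ∀ i, ∃ e, φ i e ≠ 0) :
    Dense {e | ∀ i, φ i e ≠ 0} := by
  rw [Set.ofPred_forall]
  refine dense_iInter_of_isOpen (fun i ↦ ?_) fun i ↦ ?_
  · exact isOpen_ne_fun (continuousOn_univ.mp (hφ i).continuousOn) continuous_const
  · obtain ⟨e₀, he₀⟩ := hne i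
    exact dense_ne_zero_of_analyticOnNhd (hφ i) he₀

theorem analyticAt_det {L : Type*} [Fintype L] [DecidableEq L] {M : E → Matrix L L ℝ} {e : E}
    (hM : ∀ l m, AnalyticAt ℝ (fun e ↦ M e l m) e) : AnalyticAt ℝ (fun e ↦ (M e).det) e := by
  simp only [det_apply']
  fun_prop

end AnalyticGenericity

section Genericity

/-- The matrix obtained from `A` by replacing the row given by the index, if any, by `u`. -/
def replaceRow {L R : Type*} [DecidableEq L] (A : Matrix L L R) (u : L → R) :
    Option L → Matrix L L R
  | none => A
  | some l => A.updateRow l u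

variable {J G : Type*} [Fintype J] [DecidableEq J] [Group G] [Fintype G] [DecidableEq G]
variable (ρ : G →* Matrix (Vertex J G) (Vertex J G) ℝ) {b f : Vertex J G → Vertex J G → ℝ}
variable {u : Vertex J G → ℝ}

/-- The facet `σ` of `f` with the rows in `S` replaced by those of the facet `σ` of `b`, permuted by
`π`. -/
def mixedFacet (b f : Vertex J G → Vertex J G → ℝ) (σ : J → Perm G) (π : Perm (Vertex J G))
    (S : Finset (Vertex J G)) : Matrix (Vertex J G) (Vertex J G) ℝ :=
  Matrix.of (S.piecewise (fun l ↦ facet ρ b σ (π l)) (facet ρ f σ))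

theorem mixedFacet_of_mem {σ : J → Perm G} {π : Perm (Vertex J G)} {S : Finset (Vertex J G)}
    {l : Vertex J G} (hl : l ∈ S) : mixedFacet ρ b f σ π S l = facet ρ b σ (π l) :=
  piecewise_eq_of_mem S (fun l ↦ facet ρ b σ (π l)) _ hl

theorem mixedFacet_of_notMem {σ : J → Perm G} {π : Perm (Vertex J G)} {S : Finset (Vertex J G)}
    {l : Vertex J G} (hl : l ∉ S) : mixedFacet ρ b f σ π S l = facet ρ f σ l :=
  piecewise_eq_of_notMem S (fun l ↦ facet ρ b σ (π l)) _ hl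

/-- Nondegeneracy of all the cones met when the configuration `f` is changed to `b` one row at a
time, relative to the direction `u` as well. -/
def IsGeneric (b f : Vertex J G → Vertex J G → ℝ) (u : Vertex J G → ℝ) : Prop :=
  ∀ σ π S o, (replaceRow (mixedFacet ρ b f σ π S) u o).det ≠ 0

theorem exists_facet_eq (σ : J → Perm G) (A : Matrix (Vertex J G) (Vertex J G) ℝ) :
    ∃ f, facet ρ f σ = A := by
  refine ⟨fun l ↦ A l ᵥ* ρ (σ l.1 l.2)⁻¹, funext fun l ↦ ?_⟩
  rw [facet_apply, vecMul_vecMul, ← map_mul, inv_mul_cancel, map_one, vecMul_one]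

theorem exists_det_replaceRow_mixedFacet_ne_zero (hb : ∀ σ, (facet ρ b σ).det ≠ 0)
    (σ : J → Perm G) (π : Perm (Vertex J G)) (S : Finset (Vertex J G)) (o : Option (Vertex J G)) :
    ∃ f u, (replaceRow (mixedFacet ρ b f σ π S) u o).det ≠ 0 := by
  set A := (facet ρ b σ).submatrix π id
  have hA : A.det ≠ 0 := by
    rw [det_permute]
    exact mul_ne_zero (Int.cast_ne_zero.mpr (Units.ne_zero _)) (hb σ)
  obtain ⟨f, hf⟩ := exists_facet_eq ρ σ A
  have hmixed : mixedFacet ρ b f σ π S = A := by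
    rw [mixedFacet, hf]
    exact S.piecewise_same A
  cases o with
  | none => exact ⟨f, 0, by rwa [hmixed]⟩
  | some l => exact ⟨f, A l, by rwa [hmixed, replaceRow, updateRow_eq_self]⟩

theorem analyticAt_mixedFacet (σ : J → Perm G) (π : Perm (Vertex J G)) (S : Finset (Vertex J G))
    (l m : Vertex J G) : AnalyticAt ℝ (fun f ↦ mixedFacet ρ b f σ π S l m) f := by
  by_cases hl : l ∈ S
  · simp only [mixedFacet_of_mem ρ hl]
    exact analyticAt_const
  · simp only [mixedFacet_of_notMem ρ hl]
    exact (LinearMap.toContinuousLinearMap ((LinearMap.proj m).comp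
      ((vecMulLinear (ρ (σ l.1 l.2))).comp (LinearMap.proj l)))).analyticAt f

theorem dense_isGeneric (hb : ∀ σ, (facet ρ b σ).det ≠ 0) :
    Dense {e : (Vertex J G → Vertex J G → ℝ) × (Vertex J G → ℝ) | IsGeneric ρ b e.1 e.2} := by
  have hφ : ∀ i : (J → Perm G) × Perm (Vertex J G) × Finset (Vertex J G) × Option (Vertex J G),
      AnalyticOnNhd ℝ (fun e : (Vertex J G → Vertex J G → ℝ) × (Vertex J G → ℝ) ↦
        (replaceRow (mixedFacet ρ b e.1 i.1 i.2.1 i.2.2.1) e.2 i.2.2.2).det) Set.univ := by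
    rintro ⟨σ, π, S, o⟩ e -
    refine analyticAt_det fun l m ↦ ?_
    have hmixed := (analyticAt_mixedFacet ρ (b := b) σ π S l m).comp (analyticAt_fst (p := e))
    cases o with
    | none => exact hmixed
    | some l' =>
      simp only [replaceRow, updateRow_apply]
      split_ifs
      · exact ((ContinuousLinearMap.proj m).comp (ContinuousLinearMap.snd ℝ _ _)).analyticAt e
      · exact hmixed
  refine (dense_forall_ne_zero_of_analyticOnNhd hφ fun ⟨σ, π, S, o⟩ ↦ ?_).mono ?_
  · obtain ⟨f, u, h⟩ := exists_det_replaceRow_mixedFacet_ne_zero ρ hb σ π S o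
    exact ⟨(f, u), h⟩
  · exact fun e he σ π S o ↦ he (σ, π, S, o)

theorem facet_piecewise (σ : J → Perm G) (S : Finset (Vertex J G)) :
    facet ρ (S.piecewise b f) σ = mixedFacet ρ b f σ 1 S := by
  refine funext fun l ↦ ?_
  by_cases hl : l ∈ S
  · rw [facet_apply, piecewise_eq_of_mem _ _ _ hl, mixedFacet_of_mem ρ hl]
    rfl
  · rw [facet_apply, piecewise_eq_of_notMem _ _ _ hl, mixedFacet_of_notMem ρ hl, facet_apply]

theorem mixedFacet_updateRow (σ : J → Perm G) {S : Finset (Vertex J G)} {l₀ : Vertex J G}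
    (hl₀ : l₀ ∉ S) (l : Vertex J G) :
    (mixedFacet ρ b f σ 1 S).updateRow l (facet ρ b σ l₀) =
      mixedFacet ρ b f σ (swap l₀ l) (insert l S) := by
  refine funext fun m ↦ ?_
  rcases eq_or_ne m l with rfl | hm
  · rw [updateRow_self, mixedFacet_of_mem ρ (mem_insert_self m S), swap_apply_right]
  rw [updateRow_ne hm]
  by_cases hmS : m ∈ S
  · rw [mixedFacet_of_mem ρ hmS, mixedFacet_of_mem ρ (mem_insert_of_mem hmS), Perm.one_apply,
      swap_apply_of_ne_of_ne (ne_of_mem_of_not_mem hmS hl₀) hm]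
  · rw [mixedFacet_of_notMem ρ hmS, mixedFacet_of_notMem ρ (by simp [hm, hmS])]

theorem IsGeneric.card_dvd_degree_sub_degree (hG : Odd (Nat.card G)) (h : IsGeneric ρ b f u) :
    (Fintype.card G : ℤ) ∣ degree ρ u b - degree ρ u f := by
  suffices ∀ S : Finset (Vertex J G),
      (Fintype.card G : ℤ) ∣ degree ρ u (S.piecewise b f) - degree ρ u f by
    simpa only [piecewise_univ] using this univ
  intro S
  induction S using Finset.induction_on with
  | empty => simp only [piecewise_empty, sub_self, dvd_zero]
  | insert l₀ S hl₀ ih =>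
    rw [piecewise_insert, ← sub_add_sub_cancel]
    refine dvd_add (card_dvd_degree_update_sub_degree ρ hG ?_ ?_ ?_ ?_) ih <;>
      simp only [facet_piecewise, ← facet_apply, mixedFacet_updateRow ρ _ hl₀]
    · exact fun σ ↦ h σ 1 S none
    · exact fun σ l ↦ h σ 1 S (some l)
    · exact fun σ l ↦ h σ _ _ none
    · exact fun σ l m _ ↦ h σ _ _ (some m)

end Genericity

section Sarkaria

variable {J G : Type*} [Group G]

/-- The class of `z : J → G → ℝ` modulo functions depending on the color only. Its coordinates are
the values of the representative that vanishes at `1` in every color. -/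
def modConst : (J → G → ℝ) →ₗ[ℝ] (Vertex J G → ℝ) where
  toFun z m := z m.1 m.2 - z m.1 1
  map_add' z w := funext fun m ↦ add_sub_add_comm (z m.1 m.2) (w m.1 m.2) (z m.1 1) (w m.1 1)
  map_smul' c z := funext fun m ↦ (mul_sub c (z m.1 m.2) (z m.1 1)).symm

theorem modConst_apply (z : J → G → ℝ) (m : Vertex J G) :
    modConst z m = z m.1 m.2 - z m.1 1 := rfl

/-- Translation of functions by `g` on the right, moving the point mass at `a` to `a * g`. -/
def shift (g : G) : (J → G → ℝ) →ₗ[ℝ] (J → G → ℝ) where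
  toFun z j a := z j (a * g⁻¹)
  map_add' _ _ := rfl
  map_smul' _ _ := rfl

theorem shift_apply (g : G) (z : J → G → ℝ) (j : J) (a : G) : shift g z j a = z j (a * g⁻¹) := rfl

variable [DecidableEq G]

/-- The representative of a class modulo color-dependent constants that vanishes at `1`. -/
def normalRep : (Vertex J G → ℝ) →ₗ[ℝ] (J → G → ℝ) where
  toFun y j a := if h : a ≠ 1 then y (j, ⟨a, h⟩) else 0
  map_add' y z := by
    ext j a
    by_cases h : a = 1 <;> simp [h]
  map_smul' c y := by
    ext j a
    by_cases h : a = 1 <;> simp [h]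

theorem normalRep_one (y : Vertex J G → ℝ) (j : J) : normalRep y j 1 = 0 :=
  dif_neg (not_not.mpr rfl)

theorem normalRep_coe (y : Vertex J G → ℝ) (m : Vertex J G) : normalRep y m.1 m.2 = y m :=
  dif_pos m.2.2

theorem modConst_normalRep (y : Vertex J G → ℝ) : modConst (normalRep y) = y :=
  funext fun m ↦ by rw [modConst_apply, normalRep_coe, normalRep_one, sub_zero]

theorem normalRep_modConst (z : J → G → ℝ) (j : J) (a : G) :
    normalRep (modConst z) j a = z j a - z j 1 := by
  by_cases h : a = 1
  · rw [h, normalRep_one, sub_self]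
  · exact normalRep_coe (modConst z) (j, ⟨a, h⟩)

theorem normalRep_nonneg {c : Vertex J G → ℝ} (hc : 0 ≤ c) (i : J) (a : G) :
    0 ≤ normalRep c i a := by
  by_cases h : a = 1
  · rw [h, normalRep_one]
  · exact (hc (i, ⟨a, h⟩)).trans_eq (normalRep_coe c (i, ⟨a, h⟩)).symm

theorem modConst_shift_normalRep_modConst (g : G) (z : J → G → ℝ) :
    modConst (shift g (normalRep (modConst z))) = modConst (shift g z) := by
  refine funext fun m ↦ ?_
  simp only [modConst_apply, shift_apply, normalRep_modConst, sub_sub_sub_cancel_right]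

variable [Fintype G]

theorem sum_mul_eq_sum_normalRep_mul (c : Vertex J G → ℝ) (i : J) (φ : G → ℝ) :
    ∑ k : {g : G // g ≠ 1}, c (i, k) * φ k = ∑ k, normalRep c i k * φ k := by
  have hone : normalRep c i 1 * φ 1 = 0 := by rw [normalRep_one, zero_mul]
  rw [← Finset.sum_erase univ (f := fun k ↦ normalRep c i k * φ k) hone,
    Finset.sum_subtype (univ.erase 1) (p := (· ≠ 1)) (by simp)]
  exact Finset.sum_congr rfl fun k _ ↦ by rw [← normalRep_coe c (i, k)]

variable [Fintype J]

theorem sum_normalRep (c : Vertex J G → ℝ) :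
    ∑ i, ∑ a, normalRep c i a = ∑ l, c l := by
  rw [Fintype.sum_prod_type]
  refine Finset.sum_congr rfl fun i _ ↦ ?_
  simpa only [mul_one] using (sum_mul_eq_sum_normalRep_mul c i fun _ ↦ 1).symm

variable [DecidableEq J]

/-- The action of `G` on `J → G → ℝ` by translation, modulo color-dependent constants. -/
noncomputable def translation : G →* Matrix (Vertex J G) (Vertex J G) ℝ where
  toFun g := (modConst ∘ₗ shift g ∘ₗ normalRep).toMatrixRight'
  map_one' := by
    rw [← LinearMap.toMatrixRight'_id]
    congr 1
    refine LinearMap.ext fun y ↦ ?_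
    have hshift : shift 1 (normalRep y) = normalRep y := by
      ext j a
      simp [shift_apply]
    simp [hshift, modConst_normalRep]
  map_mul' g h := by
    rw [← LinearMap.toMatrixRight'_comp]
    congr 1
    refine LinearMap.ext fun y ↦ ?_
    have hshift : shift (g * h) (normalRep y) = shift h (shift g (normalRep y)) := by
      ext j a
      simp [shift_apply, mul_assoc]
    simp [hshift, modConst_shift_normalRep_modConst]

theorem modConst_vecMul_translation (z : J → G → ℝ) (g : G) :
    modConst z ᵥ* translation g = modConst (shift g z) := by
  rw [← modConst_shift_normalRep_modConst, ← toLinearMapRight'_apply]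
  exact LinearMap.congr_fun (LinearMap.toMatrixRight'.symm_apply_apply _) (modConst z)

/-- Sarkaria's tensors: the vertex `l` is sent to the point mass at `1` weighted by the vector
`x l.1 l.2`, modulo constants. -/
def sarkaria (x : J → G → J → ℝ) : Vertex J G → Vertex J G → ℝ :=
  fun l ↦ modConst fun j ↦ Pi.single 1 (x l.1 l.2 j)

theorem facet_sarkaria_apply (x : J → G → J → ℝ) (σ : J → Perm G) (l : Vertex J G) :
    facet translation (sarkaria x) σ l =
      modConst fun j ↦ Pi.single (σ l.1 l.2) (x l.1 l.2 j) := by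
  rw [facet_apply, sarkaria, modConst_vecMul_translation]
  congr 1
  ext j a
  simp [shift_apply, Pi.single_apply, mul_inv_eq_one]

theorem vecMul_facet_sarkaria (x : J → G → J → ℝ) (σ : J → Perm G) (c : Vertex J G → ℝ) :
    c ᵥ* facet translation (sarkaria x) σ =
      modConst fun j a ↦ ∑ i, normalRep c i ((σ i).symm a) * x i ((σ i).symm a) j := by
  simp only [vecMul_eq_sum, facet_sarkaria_apply, ← map_smul, ← map_sum]
  congr 1
  ext j a
  simp only [Finset.sum_apply, Pi.smul_apply, smul_eq_mul, Fintype.sum_prod_type]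
  refine Finset.sum_congr rfl fun i _ ↦ ?_
  rw [sum_mul_eq_sum_normalRep_mul c i fun k ↦
    (Pi.single (σ i k) (x i k j) : G → ℝ) a,
    Fintype.sum_eq_single ((σ i).symm a) fun k hk ↦ ?_]
  · rw [apply_symm_apply, Pi.single_eq_same]
  · rw [Pi.single_eq_of_ne fun h ↦ hk ((σ i).eq_symm_apply.mpr h.symm), mul_zero]

/-- The tensors of the configuration in which every point of color `j` is the `j`-th basis
vector. -/
abbrev standardConfig (J G : Type*) [DecidableEq J] [Group G] [DecidableEq G] :
    Vertex J G → Vertex J G → ℝ :=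
  sarkaria fun j _ ↦ Pi.single j 1

theorem vecMul_facet_standardConfig (σ : J → Perm G) (c : Vertex J G → ℝ) :
    c ᵥ* facet translation (standardConfig J G) σ =
      modConst fun j a ↦ normalRep c j ((σ j).symm a) := by
  simp [vecMul_facet_sarkaria, Pi.single_apply]

theorem modConst_vecMul_facet_standardConfig (σ : J → Perm G) (u : Vertex J G → ℝ) :
    modConst (fun j k ↦ normalRep u j (σ j k)) ᵥ* facet translation (standardConfig J G) σ = u := by
  rw [vecMul_facet_standardConfig]
  conv_rhs => rw [← modConst_normalRep u]
  refine funext fun m ↦ ?_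
  simp only [modConst_apply, normalRep_modConst, apply_symm_apply, sub_sub_sub_cancel_right]

theorem det_facet_standardConfig_ne_zero (σ : J → Perm G) :
    (facet translation (standardConfig J G) σ).det ≠ 0 := by
  have h := vecMul_surjective_iff_isUnit.mp fun u ↦ ⟨_, modConst_vecMul_facet_standardConfig σ u⟩
  exact ((isUnit_iff_isUnit_det _).mp h).ne_zero

end Sarkaria

section StandardDegree

variable {J G : Type*} [Fintype J] [DecidableEq J] [Group G] [Fintype G] [DecidableEq G]
variable {u : Vertex J G → ℝ}

theorem normalRep_injective_of_det_updateRow_ne_zero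
    (hu : ∀ σ l, ((facet translation (standardConfig J G) σ).updateRow l u).det ≠ 0) (j : J) :
    Function.Injective (normalRep u j) := by
  intro a a' haa'
  by_contra hne
  have hk : a' * a⁻¹ ≠ 1 := fun h ↦ hne (mul_inv_eq_one.mp h).symm
  refine hu (rightTranslation J a) (j, ⟨_, hk⟩) ?_
  conv_lhs => rw [← modConst_vecMul_facet_standardConfig (rightTranslation J a) u]
  rw [det_updateRow_vecMul]
  simp [modConst_apply, rightTranslation, haa']

open scoped Classical in
theorem signedCone_facet_standardConfig (σ : J → Perm G) :
    signedCone u (facet translation (standardConfig J G) σ) =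
      (SignType.sign (facet translation (standardConfig J G) σ).det : ℤ) *
        if ∀ m : Vertex J G, normalRep u m.1 (σ m.1 1) < normalRep u m.1 (σ m.1 m.2)
        then 1 else 0 := by
  conv_lhs => rw [← modConst_vecMul_facet_standardConfig σ u]
  rw [signedCone_vecMul (det_facet_standardConfig_ne_zero σ)]
  simp only [modConst_apply, sub_pos]

/-- In every color, extends a permutation of `G \ {1}` to the permutation of `G` fixing `1`. -/
def extendPerm : (J → Perm {g : G // g ≠ 1}) →* (J → Perm G) :=
  Perm.ofSubtype.compLeft J

theorem orientation_extendPerm (π : J → Perm {g : G // g ≠ 1}) :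
    orientation (extendPerm π) = Perm.sign (prodCongrRight π) := by
  rw [Perm.sign_prodCongrRight]
  exact Finset.prod_congr rfl fun j _ ↦ Perm.sign_ofSubtype (π j)

theorem facet_standardConfig_mul_extendPerm (s : J → Perm G) (π : J → Perm {g : G // g ≠ 1}) :
    facet translation (standardConfig J G) (s * extendPerm π) =
      (facet translation (standardConfig J G) s).submatrix (prodCongrRight π) id := by
  refine funext fun l ↦ ?_
  have hl : extendPerm π l.1 l.2 = π l.1 l.2 := Perm.ofSubtype_apply_coe (π l.1) l.2
  change _ = facet translation (standardConfig J G) s (prodCongrRight π l)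
  rw [facet_sarkaria_apply, facet_sarkaria_apply, Pi.mul_apply, Perm.mul_apply, hl]
  rfl

theorem orientation_mul_signedCone_mul_extendPerm (s : J → Perm G)
    (π : J → Perm {g : G // g ≠ 1}) :
    (orientation (s * extendPerm π) : ℤ) *
        signedCone u (facet translation (standardConfig J G) (s * extendPerm π)) =
      orientation s * signedCone u (facet translation (standardConfig J G) s) := by
  rw [facet_standardConfig_mul_extendPerm, signedCone_submatrix, map_mul, orientation_extendPerm,
    Units.val_mul, ← mul_assoc, mul_assoc (orientation s : ℤ), ← Units.val_mul (Perm.sign _),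
    Int.units_mul_self, Units.val_one, mul_one]

theorem filter_apply_one_eq_image_extendPerm (s : J → Perm G) :
    ({σ | ∀ j, σ j 1 = s j 1} : Finset (J → Perm G)) = univ.image fun π ↦ s * extendPerm π := by
  ext σ
  simp only [mem_filter_univ, mem_image, mem_univ, true_and]
  constructor
  · intro hσ
    have hone : ∀ j, ((s j)⁻¹ * σ j) 1 = 1 := fun j ↦ by
      rw [Perm.mul_apply, hσ]
      exact (s j).symm_apply_apply 1
    have hfix : ∀ j a, ((s j)⁻¹ * σ j) a ≠ 1 ↔ a ≠ 1 := fun j a ↦ by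
      rw [← ((s j)⁻¹ * σ j).injective.ne_iff (x := a), hone]
    refine ⟨fun j ↦ ((s j)⁻¹ * σ j).subtypePerm (hfix j), funext fun j ↦ ?_⟩
    have hext : Perm.ofSubtype (((s j)⁻¹ * σ j).subtypePerm (hfix j)) = (s j)⁻¹ * σ j :=
      Perm.ofSubtype_subtypePerm (p := (· ≠ 1)) (hfix j) fun a ha h ↦
        ha (by rw [h, hone])
    exact (congrArg (s j * ·) hext).trans (mul_inv_cancel_left _ _)
  · rintro ⟨π, rfl⟩ j
    exact congrArg (s j) (Perm.ofSubtype_apply_of_not_mem (π j) (by simp))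

/-- Only the facets that leave out the minimum of `normalRep u j` in every color `j` contribute,
and all of them do so with the same sign. -/
theorem exists_degree_standardConfig_eq (hu : ∀ j, Function.Injective (normalRep u j)) :
    ∃ ε : ℤ, IsUnit ε ∧ degree translation u (standardConfig J G) =
      ε * ((Fintype.card G - 1).factorial ^ Fintype.card J : ℕ) := by
  choose m hm using fun j ↦ Finite.exists_min (normalRep u j)
  set s : J → Perm G := fun j ↦ Equiv.mulRight (m j)
  have hs : ∀ j, s j 1 = m j := fun j ↦ one_mul (m j)
  have hcone : signedCone u (facet translation (standardConfig J G) s) =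
      SignType.sign (facet translation (standardConfig J G) s).det := by
    rw [signedCone_facet_standardConfig, if_pos fun l ↦ ?_, mul_one]
    rw [hs]
    exact (hm l.1 _).lt_of_ne fun h ↦ l.2.2 (mul_eq_right.mp (hu l.1 h).symm)
  have hvanish : ∀ σ : J → Perm G, (orientation σ : ℤ) *
      signedCone u (facet translation (standardConfig J G) σ) ≠ 0 → ∀ j, σ j 1 = s j 1 := by
    intro σ hσ j
    by_contra hj
    have hk : (σ j).symm (m j) ≠ 1 := fun h ↦ hj (by rw [hs, ← h, apply_symm_apply])
    refine hσ ?_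
    rw [signedCone_facet_standardConfig, if_neg fun h ↦ ?_, mul_zero, mul_zero]
    exact (hm j _).not_gt (apply_symm_apply (σ j) (m j) ▸ h (j, ⟨_, hk⟩))
  refine ⟨orientation s * signedCone u (facet translation (standardConfig J G) s), ?_, ?_⟩
  · rw [hcone]
    refine (Units.isUnit _).mul (Int.isUnit_iff.mpr ?_)
    rcases (det_facet_standardConfig_ne_zero s).lt_or_gt with h | h
    · exact .inr (by rw [sign_neg h]; rfl)
    · exact .inl (by rw [sign_pos h]; rfl)
  · have hinj : Function.Injective fun π : J → Perm {g : G // g ≠ 1} ↦ s * extendPerm π :=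
      (mul_right_injective s).comp Perm.ofSubtype_injective.comp_left
    rw [degree, ← Finset.sum_filter_of_ne fun σ _ ↦ hvanish σ,
      filter_apply_one_eq_image_extendPerm, Finset.sum_image hinj.injOn]
    simp only [orientation_mul_signedCone_mul_extendPerm]
    rw [Finset.sum_const, card_univ, nsmul_eq_mul, mul_comm, Fintype.card_fun,
      Fintype.card_perm, Fintype.card_subtype_compl, Fintype.card_subtype_eq]

theorem not_card_dvd_degree_standardConfig (hG : (Fintype.card G).Prime)
    (hu : ∀ j, Function.Injective (normalRep u j)) :
    ¬ (Fintype.card G : ℤ) ∣ degree translation u (standardConfig J G) := by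
  obtain ⟨ε, hε, hdeg⟩ := exists_degree_standardConfig_eq hu
  rw [hdeg, hε.dvd_mul_left, Int.natCast_dvd_natCast]
  intro h
  have hle := (hG.dvd_factorial).mp (hG.dvd_of_dvd_pow h)
  have hpos := hG.pos
  omega

theorem IsGeneric.exists_pos_vecMul_facet_eq (hG : (Fintype.card G).Prime)
    (hodd : Odd (Nat.card G)) {f : Vertex J G → Vertex J G → ℝ}
    (h : IsGeneric translation (standardConfig J G) f u) :
    ∃ σ, ∃ c : Vertex J G → ℝ, (∀ l, 0 < c l) ∧ c ᵥ* facet translation f σ = u := by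
  have hu : ∀ σ l, ((facet translation (standardConfig J G) σ).updateRow l u).det ≠ 0 := by
    intro σ l
    have huniv : mixedFacet translation (standardConfig J G) f σ 1 univ =
        facet translation (standardConfig J G) σ :=
      funext fun m ↦ mixedFacet_of_mem translation (mem_univ m)
    exact huniv ▸ h σ 1 univ (some l)
  have hstd := not_card_dvd_degree_standardConfig hG
    (normalRep_injective_of_det_updateRow_ne_zero hu)
  have hdeg : degree translation u f ≠ 0 := fun h0 ↦ hstd <| by
    simpa only [h0, sub_zero] using h.card_dvd_degree_sub_degree translation hodd
  obtain ⟨σ, -, hσ⟩ := Finset.exists_ne_zero_of_sum_ne_zero hdeg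
  exact ⟨σ, of_not_not fun hc ↦ right_ne_zero_of_mul hσ (if_neg hc)⟩

end StandardDegree

section Limit

theorem isClosed_setOf_exists_stdSimplex_vecMul_eq {E L M : Type*} [TopologicalSpace E] [Fintype L]
    {A : E → Matrix L M ℝ} {u : E → M → ℝ} (hA : Continuous A) (hu : Continuous u) :
    IsClosed {e | ∃ w ∈ stdSimplex ℝ (Option L), (fun l ↦ w (some l)) ᵥ* A e = w none • u e} := by
  have : CompactSpace (stdSimplex ℝ (Option L)) :=
    isCompact_iff_compactSpace.mp (isCompact_stdSimplex ℝ _)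
  have hw : ∀ o, Continuous fun q : stdSimplex ℝ (Option L) × E ↦ q.1.1 o := fun o ↦
    (continuous_apply o).comp (continuous_subtype_val.comp continuous_fst)
  have hclosed : IsClosed {q : stdSimplex ℝ (Option L) × E |
      (fun l ↦ q.1.1 (some l)) ᵥ* A q.2 = q.1.1 none • u q.2} :=
    isClosed_eq (Continuous.matrix_vecMul (continuous_pi fun l ↦ hw (some l))
      (hA.comp continuous_snd))
      ((hw none).smul (hu.comp continuous_snd))
  convert isClosedMap_snd_of_compactSpace _ hclosed using 1
  ext e
  simp

theorem exists_stdSimplex_vecMul_eq {L M : Type*} [Fintype L] {A : Matrix L M ℝ} {u : M → ℝ}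
    {c : L → ℝ} (hc : 0 ≤ c) (h : c ᵥ* A = u) :
    ∃ w ∈ stdSimplex ℝ (Option L), (fun l ↦ w (some l)) ᵥ* A = w none • u := by
  have hs : 0 < 1 + ∑ l, c l := add_pos_of_pos_of_nonneg one_pos (sum_nonneg fun l _ ↦ hc l)
  refine ⟨(1 + ∑ l, c l)⁻¹ • fun o ↦ o.elim 1 c, ⟨fun o ↦ ?_, ?_⟩, ?_⟩
  · refine mul_nonneg (inv_pos.mpr hs).le ?_
    cases o with
    | none => exact zero_le_one
    | some l => exact hc l
  · simp only [Pi.smul_apply, smul_eq_mul, ← Finset.mul_sum, Fintype.sum_option]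
    exact inv_mul_cancel₀ hs.ne'
  · change ((1 + ∑ l, c l)⁻¹ • c) ᵥ* A = ((1 + ∑ l, c l)⁻¹ * 1) • u
    rw [smul_vecMul, h, mul_one]

variable {J G : Type*} [Fintype J] [DecidableEq J] [Group G] [Fintype G] [DecidableEq G]

theorem exists_stdSimplex_vecMul_facet_eq (hG : (Fintype.card G).Prime) (hodd : Odd (Nat.card G))
    (f : Vertex J G → Vertex J G → ℝ) (u : Vertex J G → ℝ) :
    ∃ σ, ∃ w ∈ stdSimplex ℝ (Option (Vertex J G)),
      (fun l ↦ w (some l)) ᵥ* facet translation f σ = w none • u := by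
  set Z : Set ((Vertex J G → Vertex J G → ℝ) × (Vertex J G → ℝ)) := ⋃ σ, {e |
    ∃ w ∈ stdSimplex ℝ (Option (Vertex J G)),
      (fun l ↦ w (some l)) ᵥ* facet translation e.1 σ = w none • e.2}
  have hclosed : IsClosed Z := by
    refine isClosed_iUnion_of_finite fun σ ↦
      isClosed_setOf_exists_stdSimplex_vecMul_eq ?_ continuous_snd
    refine continuous_pi fun l ↦ ?_
    simp only [facet_apply]
    exact Continuous.matrix_vecMul (by fun_prop) continuous_const
  have hdense : Dense Z := (dense_isGeneric translation det_facet_standardConfig_ne_zero).mono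
    fun e he ↦ by
      obtain ⟨σ, c, hc, h⟩ := he.exists_pos_vecMul_facet_eq hG hodd
      exact Set.mem_iUnion.mpr ⟨σ, exists_stdSimplex_vecMul_eq (fun l ↦ (hc l).le) h⟩
  have hmem : (f, u) ∈ Z := hclosed.closure_eq ▸ hdense (f, u)
  exact Set.mem_iUnion.mp hmem

end Limit

section Balanced

variable {J G : Type*} [Fintype J] [Group G] [Fintype G]

theorem exists_perm_weights {U : Type*} [AddCommGroup U] [Module ℝ U] [Module.Finite ℝ U]
    (hU : Module.finrank ℝ U ≤ Fintype.card J) (hG : (Fintype.card G).Prime)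
    (hodd : Odd (Nat.card G)) (x : J → G → U) (e : U) :
    ∃ (τ : J → Perm G) (ω : J → G → ℝ) (s : ℝ), (∀ j g, 0 ≤ ω j g) ∧ 0 ≤ s ∧
      s + ∑ g, ∑ j, ω j g = 1 ∧
      ∀ g ≠ 1, ∑ j, ω j g • x j (τ j g) = ∑ j, ω j 1 • x j (τ j 1) + s • e := by
  classical
  obtain ⟨L, hL⟩ := finrank_le_iff_exists_linearMap.mp
    (hU.trans_eq (Module.finrank_fintype_fun_eq_card ℝ).symm)
  obtain ⟨σ, w, ⟨hw, hsum⟩, h⟩ := exists_stdSimplex_vecMul_facet_eq hG hodd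
    (sarkaria fun j g ↦ L (x j g)) fun l ↦ L e l.1
  set c : Vertex J G → ℝ := fun l ↦ w (some l)
  refine ⟨fun j ↦ (σ j).symm, fun j g ↦ normalRep c j ((σ j).symm g), w none,
    fun j g ↦ normalRep_nonneg (fun l ↦ hw (some l)) j _, hw none, ?_, fun g hg ↦ hL ?_⟩
  · rw [← hsum, Fintype.sum_option, Finset.sum_comm, ← sum_normalRep]
    congr 1
    exact Finset.sum_congr rfl fun j _ ↦ (σ j).symm.sum_comp (normalRep c j)
  · rw [vecMul_facet_sarkaria] at h
    ext j
    have hj := congrFun h (j, ⟨g, hg⟩)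
    simp only [modConst_apply, Pi.smul_apply, smul_eq_mul] at hj
    simp only [map_add, map_sum, map_smul, Pi.add_apply, Finset.sum_apply, Pi.smul_apply,
      smul_eq_mul]
    linear_combination hj

theorem exists_perm_forall_ne_one_mem_convexHull {V : Type*} [AddCommGroup V] [Module ℝ V]
    [Module.Finite ℝ V] (hV : Module.finrank ℝ V < Fintype.card J) (hG : (Fintype.card G).Prime)
    (hodd : Odd (Nat.card G)) (x : J → G → V) :
    ∃ (τ : J → Perm G) (P : V), ∀ g ≠ 1, P ∈ convexHull ℝ (Set.range fun j ↦ x j (τ j g)) := by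
  have hU : Module.finrank ℝ (V × ℝ) ≤ Fintype.card J := by
    rwa [Module.finrank_prod, Module.finrank_self]
  obtain ⟨τ, ω, s, hω, hs, hsum, h⟩ :=
    exists_perm_weights hU hG hodd (fun j g ↦ (x j g, (1 : ℝ))) (0, 1)
  have hpoint : ∀ g ≠ 1, ∑ j, ω j g • x j (τ j g) = ∑ j, ω j 1 • x j (τ j 1) := fun g hg ↦ by
    simpa [Prod.fst_sum] using congrArg Prod.fst (h g hg)
  have hweight : ∀ g ≠ 1, ∑ j, ω j g = ∑ j, ω j 1 + s := fun g hg ↦ by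
    simpa [Prod.snd_sum] using congrArg Prod.snd (h g hg)
  have hone : 0 ≤ ∑ j, ω j 1 := sum_nonneg fun j _ ↦ hω j 1
  have hpos : 0 < ∑ j, ω j 1 + s := by
    refine (add_nonneg hone hs).lt_of_ne' fun h0 ↦ ?_
    obtain ⟨h1, rfl⟩ := (add_eq_zero_iff_of_nonneg hone hs).mp h0
    have hall : ∀ g, ∑ j, ω j g = 0 := fun g ↦ by
      by_cases hg : g = 1
      · rw [hg, h1]
      · rw [hweight g hg, h0]
    simp [hall] at hsum
  refine ⟨τ, (∑ j, ω j 1 + s)⁻¹ • ∑ j, ω j 1 • x j (τ j 1), fun g hg ↦ ?_⟩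
  rw [← hweight g hg, ← hpoint g hg]
  exact univ.centerMass_mem_convexHull (fun j _ ↦ hω j g) (hweight g hg ▸ hpos)
    fun j _ ↦ Set.mem_range_self j

end Balanced

section Transversals

theorem exists_embedding_colorClass {α κ : Type*} {X : Finset α} {col : α → κ} {t : ℕ} {c : κ}
    (ht : t ≤ {x ∈ (X : Set α) | col x = c}.ncard) :
    ∃ f : Fin t ↪ α, ∀ i, f i ∈ X ∧ col (f i) = c := by
  have : Fintype {x ∈ (X : Set α) | col x = c} := (X.finite_toSet.sep _).fintype
  obtain ⟨f⟩ : Nonempty (Fin t ↪ {x ∈ (X : Set α) | col x = c}) :=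
    Function.Embedding.nonempty_of_card_le <| by
      rwa [Fintype.card_fin, ← Nat.card_eq_fintype_card, Nat.card_coe_set_eq]
  exact ⟨f.trans (.subtype _), fun i ↦ (f i).2⟩

variable {V ι : Type*} [AddCommGroup V] [Module ℝ V] [Module.Finite ℝ V] [Fintype ι]

theorem exists_embedding_forall_mem_convexHull (hV : Module.finrank ℝ V < Fintype.card ι)
    {r t : ℕ} (ht : 2 * r - 1 ≤ t) (x : ι → Fin t → V) :
    ∃ (τ : ι → Fin r ↪ Fin t) (P : V),
      ∀ i, P ∈ convexHull ℝ (Set.range fun c ↦ x c (τ c i)) := by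
  rcases lt_or_ge r 2 with hr | hr
  · have : Subsingleton (Fin r) := Fin.subsingleton_iff_le_one.mpr (Nat.le_of_lt_succ hr)
    obtain ⟨c⟩ : Nonempty ι := Fintype.card_pos_iff.mp (Nat.zero_lt_of_lt hV)
    have hrt : r ≤ t := by lia
    rcases isEmpty_or_nonempty (Fin r) with hempty | ⟨⟨i⟩⟩
    · exact ⟨fun _ ↦ Fin.castLEEmb hrt, 0, hempty.elim⟩
    · refine ⟨fun _ ↦ Fin.castLEEmb hrt, x c (Fin.castLEEmb hrt i), fun i' ↦ ?_⟩
      exact subset_convexHull ℝ _ ⟨c, by rw [Subsingleton.elim i' i]⟩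
  · obtain ⟨p, hp, hrp, hp2⟩ := Nat.exists_prime_lt_and_le_two_mul r (by lia)
    have : Fact p.Prime := ⟨hp⟩
    have hodd := hp.odd_of_ne_two (by lia)
    have hpt : p ≤ t := by
      obtain ⟨k, hk⟩ := hodd
      lia
    let G := Multiplicative (ZMod p)
    have hG : Fintype.card G = p := (Fintype.card_multiplicative _).trans (ZMod.card p)
    obtain ⟨a⟩ := Function.Embedding.nonempty_of_card_le (α := G) (β := Fin t) (by simpa [hG])
    obtain ⟨b⟩ := Function.Embedding.nonempty_of_card_le (α := Fin r) (β := {g : G // g ≠ 1})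
      (by simp [Fintype.card_subtype_compl, hG]; lia)
    obtain ⟨τ, P, hP⟩ := exists_perm_forall_ne_one_mem_convexHull hV (hG.symm ▸ hp)
      (by rwa [Nat.card_eq_fintype_card, hG]) fun c g ↦ x c (a g)
    exact ⟨fun c ↦ (b.trans (.subtype _)).trans ((τ c).toEmbedding.trans a), P,
      fun i ↦ hP (b i) (b i).2⟩

end Transversals

end ColorfulTverberg

theorem colorful_tverberg_general {V ι : Type*} [AddCommGroup V] [Module ℝ V] [Module.Finite ℝ V]
    [Fintype ι] (hV : Module.finrank ℝ V < Fintype.card ι) {r t : ℕ} (ht : 2 * r - 1 ≤ t)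
    (X : Finset V) (col : V → ι) (hcol : ∀ c, t ≤ {x ∈ (X : Set V) | col x = c}.ncard) :
    ∃ S : Fin r → Finset V,
      (∀ i, S i ⊆ X) ∧
      (∀ i j, i ≠ j → Disjoint (S i) (S j)) ∧
      (∀ i, (S i).card = Fintype.card ι) ∧
      (∀ i, ∀ c, ∃ x ∈ S i, col x = c) ∧
      ∃ p : V, ∀ i, p ∈ convexHull ℝ (S i : Set V) := by
  choose x hxX hxcol using fun c ↦ ColorfulTverberg.exists_embedding_colorClass (hcol c)
  obtain ⟨τ, P, hP⟩ := ColorfulTverberg.exists_embedding_forall_mem_convexHull hV ht fun c ↦ x c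
  have hcolor : ∀ i, Function.LeftInverse col fun c ↦ x c (τ c i) := fun i c ↦ hxcol c _
  refine ⟨fun i ↦ Finset.univ.map ⟨fun c ↦ x c (τ c i), (hcolor i).injective⟩, fun i y hy ↦ ?_,
    fun i j hij ↦ Finset.disjoint_left.mpr fun y hyi hyj ↦ ?_, fun i ↦ Finset.card_map _,
    fun i c ↦ ⟨x c (τ c i), by simp, hcolor i c⟩, P, fun i ↦ by simpa using hP i⟩
  · obtain ⟨c, -, rfl⟩ := Finset.mem_map.mp hy
    exact hxX c _
  · obtain ⟨c, -, rfl⟩ := Finset.mem_map.mp hyi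
    obtain ⟨c', -, h⟩ := Finset.mem_map.mp hyj
    obtain rfl : c' = c := by simpa only [Function.Embedding.coeFn_mk, hxcol] using congrArg col h
    exact hij ((τ c').injective ((x c').injective h)).symm

/-- The colorful Tverberg theorem: let `r` be a prime power, `t ≥ 2r-1`, and let
`X ⊂ ℝ^d` consist of `(d+1)t` points colored with `d+1` colors, each color used on
exactly `t` points. Then there are `r` pairwise disjoint subsets of `X`, each with
`d+1` points carrying all `d+1` colors, whose convex hulls have a common point. -/
theorem colorful_tverberg (d r t : ℕ) (hr : ∃ p k : ℕ, p.Prime ∧ r = p ^ k)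
    (ht : 2 * r - 1 ≤ t) (X : Finset (EuclideanSpace ℝ (Fin d)))
    (hX : X.card = (d + 1) * t)
    (col : EuclideanSpace ℝ (Fin d) → Fin (d + 1))
    (hcol : ∀ c : Fin (d + 1), {x ∈ (X : Set (EuclideanSpace ℝ (Fin d))) | col x = c}.ncard = t) :
    ∃ S : Fin r → Finset (EuclideanSpace ℝ (Fin d)),
      (∀ i, S i ⊆ X) ∧
      (∀ i j, i ≠ j → Disjoint (S i) (S j)) ∧
      (∀ i, (S i).card = d + 1) ∧
      (∀ i, ∀ c : Fin (d + 1), ∃ x ∈ S i, col x = c) ∧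
      ∃ p : EuclideanSpace ℝ (Fin d), ∀ i,
        p ∈ convexHull ℝ (S i : Set (EuclideanSpace ℝ (Fin d))) := by
  simpa only [Fintype.card_fin] using
    colorful_tverberg_general (by simp) ht X col fun c ↦ (hcol c).ge
end
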